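/- Let a ≥ 2, b ≥ 1, k ≥ 1, and l_1, …, l_k ≥ 1 be integers, and suppose there is an assignment of elements α_{i,j} ∈ {y_1, …, y_b, u_1, …, u_b} (for 1 ≤ i ≤ l_j, 1 ≤ j ≤ k) whose set of values is exactly {y_q, u_q : 1 ≤ q ≤ b}. Then there exists an I-isolated (in particular, F-isolated) smooth Fano polytope P of dimension n = a + 2b − 1 + Σ_{j=1}^k l_j with n + k + 3 vertices V(P) = {v_1,…,v_a, y_1,…,y_b, z, t, u_1,…,u_b} ∪ {w_{1,j},…,w_{l_j+1,j} : 1 ≤ j ≤ k} whose primitive relations are exactly: v_1+⋯+v_a+y_1+⋯+y_b = (a+b−1)t; y_1+⋯+y_b+z = u_1+⋯+u_b; z+t = 0; t+u_1+⋯+u_b = y_1+⋯+y_b; u_1+⋯+u_b+v_1+⋯+v_a = (a+b−2)t; and, for each 1 ≤ j ≤ k, w_{1,j}+⋯+w_{l_j+1,j} = α_{1,j}+⋯+α_{l_j,j}. -/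

import Mathlib

/-! ## Basic definitions: lattice polytopes, smooth Fano polytopes,
unimodular equivalence, F- and I-equivalence, primitive collections. -/

/-- A point of `ℝ^n` all of whose coordinates are integers. -/
def IsLatticePoint {n : ℕ} (x : Fin n → ℝ) : Prop := ∀ i, ∃ m : ℤ, x i = (m : ℝ)

/-- The vertex set of a polytope: its extreme points. -/
def vertexSet {n : ℕ} (P : Set (Fin n → ℝ)) : Set (Fin n → ℝ) :=
  Set.extremePoints ℝ P

/-- A lattice `n`-polytope: the convex hull of finitely many lattice points,
of full dimension `n`. -/
def IsLatticePolytope {n : ℕ} (P : Set (Fin n → ℝ)) : Prop :=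
  (∃ S : Finset (Fin n → ℝ), (∀ x ∈ S, IsLatticePoint x) ∧
    P = convexHull ℝ (S : Set (Fin n → ℝ))) ∧
  affineSpan ℝ P = ⊤

/-- A face of `P`: an exposed subset of `P`. -/
def IsFaceOf {n : ℕ} (F P : Set (Fin n → ℝ)) : Prop := IsExposed ℝ P F

/-- A facet of `P`: a face of affine dimension `n - 1`. -/
def IsFacetOf {n : ℕ} (F P : Set (Fin n → ℝ)) : Prop :=
  IsFaceOf F P ∧ Module.finrank ℝ (vectorSpan ℝ F) + 1 = n

/-- A set `S` of points of `ℝ^n` forms a `ℤ`-basis of `ℤ^n`: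
it consists of `n` lattice points whose matrix has determinant `±1`. -/
def IsUnimodularBasis {n : ℕ} (S : Set (Fin n → ℝ)) : Prop :=
  ∃ b : Fin n → (Fin n → ℝ), Function.Injective b ∧ Set.range b = S ∧
    (∀ i, IsLatticePoint (b i)) ∧ |(Matrix.of b).det| = 1

/-- A smooth Fano `n`-polytope: a lattice `n`-polytope with the origin in its
interior such that the vertex set of every facet is a `ℤ`-basis of `ℤ^n`. -/
def IsSmoothFano {n : ℕ} (P : Set (Fin n → ℝ)) : Prop :=
  IsLatticePolytope P ∧ (0 : Fin n → ℝ) ∈ interior P ∧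
    ∀ F : Set (Fin n → ℝ), IsFacetOf F P → IsUnimodularBasis (vertexSet P ∩ F)

/-- Two subsets of `ℝ^n` are unimodularly equivalent if an affine map of `ℝ^n`
mapping `ℤ^n` onto `ℤ^n` maps one onto the other. -/
def UnimodularEquiv {n : ℕ} (Q Q' : Set (Fin n → ℝ)) : Prop :=
  ∃ φ : (Fin n → ℝ) →ᵃ[ℝ] (Fin n → ℝ),
    φ '' {x | IsLatticePoint x} = {x | IsLatticePoint x} ∧ φ '' Q = Q'

/-- One step of an I-sequence: the vertex set of one polytope is obtained from
the vertex set of the other by adding one new lattice point. -/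
def IStep {n : ℕ} (P Q : Set (Fin n → ℝ)) : Prop :=
  (∃ w : Fin n → ℝ, IsLatticePoint w ∧ w ∉ vertexSet P ∧
    vertexSet Q = vertexSet P ∪ {w}) ∨
  (∃ w : Fin n → ℝ, IsLatticePoint w ∧ w ∉ vertexSet Q ∧
    vertexSet P = vertexSet Q ∪ {w})

/-- I-equivalence of smooth Fano `n`-polytopes. -/
def IEquiv {n : ℕ} (P Q : Set (Fin n → ℝ)) : Prop :=
  ∃ (k : ℕ) (c : Fin (k + 1) → Set (Fin n → ℝ)),
    (∀ i, IsSmoothFano (c i)) ∧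
    UnimodularEquiv P (c 0) ∧ UnimodularEquiv Q (c (Fin.last k)) ∧
    ∀ i : Fin k, IStep (c i.castSucc) (c i.succ)

/-- `Q` is the stellar subdivision of `P` at the new vertex `w`: `w` is the sum
of the vertices of a proper face `F` of `P`, and the facets of `Q` containing
`w` are exactly the sets `conv({w} ∪ (V(F') \ {v}))` for `F'` a facet of `P`
containing `F` and `v` a vertex of `F`. -/
def IsStellarSubdivisionAt {n : ℕ} (P Q : Set (Fin n → ℝ)) (w : Fin n → ℝ) : Prop :=
  ∃ F : Set (Fin n → ℝ), IsFaceOf F P ∧ F.Nonempty ∧ F ≠ P ∧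
    w = ∑ᶠ v ∈ vertexSet P ∩ F, v ∧
    {G : Set (Fin n → ℝ) | IsFacetOf G Q ∧ w ∈ G} =
      {G : Set (Fin n → ℝ) | ∃ F' v, IsFacetOf F' P ∧ F ⊆ F' ∧
        v ∈ vertexSet P ∩ F ∧
        G = convexHull ℝ (insert w ((vertexSet P ∩ F') \ {v}))}

/-- One step of an F-sequence: an I-step which moreover is a stellar
subdivision (or its inverse). -/
def FStep {n : ℕ} (P Q : Set (Fin n → ℝ)) : Prop :=
  (∃ w : Fin n → ℝ, IsLatticePoint w ∧ w ∉ vertexSet P ∧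
    vertexSet Q = vertexSet P ∪ {w} ∧ IsStellarSubdivisionAt P Q w) ∨
  (∃ w : Fin n → ℝ, IsLatticePoint w ∧ w ∉ vertexSet Q ∧
    vertexSet P = vertexSet Q ∪ {w} ∧ IsStellarSubdivisionAt Q P w)

/-- F-equivalence of smooth Fano `n`-polytopes. -/
def FEquiv {n : ℕ} (P Q : Set (Fin n → ℝ)) : Prop :=
  ∃ (k : ℕ) (c : Fin (k + 1) → Set (Fin n → ℝ)),
    (∀ i, IsSmoothFano (c i)) ∧
    UnimodularEquiv P (c 0) ∧ UnimodularEquiv Q (c (Fin.last k)) ∧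
    ∀ i : Fin k, FStep (c i.castSucc) (c i.succ)

/-- A smooth Fano polytope is F-isolated if every smooth Fano polytope
F-equivalent to it is unimodularly equivalent to it. -/
def FIsolated {n : ℕ} (P : Set (Fin n → ℝ)) : Prop :=
  ∀ Q : Set (Fin n → ℝ), IsSmoothFano Q → FEquiv Q P → UnimodularEquiv Q P

/-- A smooth Fano polytope is I-isolated if every smooth Fano polytope
I-equivalent to it is unimodularly equivalent to it. -/
def IIsolated {n : ℕ} (P : Set (Fin n → ℝ)) : Prop :=
  ∀ Q : Set (Fin n → ℝ), IsSmoothFano Q → IEquiv Q P → UnimodularEquiv Q P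

/-- A primitive collection of a smooth Fano polytope `P`: a nonempty set `A` of
vertices such that `conv(A)` is not a face of `P` but `conv(A \ {x})` is a face
of `P` for every `x ∈ A`. -/
def IsPrimitiveCollection {n : ℕ} (P A : Set (Fin n → ℝ)) : Prop :=
  A.Nonempty ∧ A ⊆ vertexSet P ∧ ¬ IsFaceOf (convexHull ℝ A) P ∧
    ∀ x ∈ A, IsFaceOf (convexHull ℝ (A \ {x})) P

/-- The standard basis vector `e_i` of `ℝ^n`. -/
def stdBasis {n : ℕ} (i : Fin n) : Fin n → ℝ := fun q => if q = i then 1 else 0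

/-- The polytope `T^n = conv{e_1, …, e_n, -(e_1 + ⋯ + e_n)}`,
corresponding to projective `n`-space. -/
def Tpoly (n : ℕ) : Set (Fin n → ℝ) :=
  convexHull ℝ (Set.range (stdBasis (n := n)) ∪ {fun _ => (-1 : ℝ)})

/-- `P` has the vertex labeling
`v_1, …, v_a, y_1, …, y_b, z, t, u_1, …, u_b, w_{i,j} (1 ≤ i ≤ l_j + 1, 1 ≤ j ≤ k)`
and its primitive collections and primitive relations are exactly:
`v_1+⋯+v_a+y_1+⋯+y_b = (a+b-1)t`; `y_1+⋯+y_b+z = u_1+⋯+u_b`; `z+t = 0`;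
`t+u_1+⋯+u_b = y_1+⋯+y_b`; `u_1+⋯+u_b+v_1+⋯+v_a = (a+b-2)t`; and
`w_{1,j}+⋯+w_{l_j+1,j} = α_{1,j}+⋯+α_{l_j,j}` for `1 ≤ j ≤ k`, where
`A j i` is the vertex among the `y`'s and `u`'s named by `α_{i,j}`. -/
def HasGeneralStructure {n : ℕ} (P : Set (Fin n → ℝ)) (a b k : ℕ) (l : Fin k → ℕ)
    (v : Fin a → Fin n → ℝ) (y : Fin b → Fin n → ℝ) (z t : Fin n → ℝ)
    (u : Fin b → Fin n → ℝ) (w : (j : Fin k) → Fin (l j + 1) → Fin n → ℝ)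
    (A : (j : Fin k) → Fin (l j) → Fin n → ℝ) : Prop :=
  vertexSet P =
    Set.range v ∪ Set.range y ∪ {z, t} ∪ Set.range u ∪ ⋃ j, Set.range (w j) ∧
  (∀ B : Set (Fin n → ℝ), IsPrimitiveCollection P B ↔
    (B = Set.range v ∪ Set.range y ∨ B = Set.range y ∪ {z} ∨ B = {z, t} ∨
     B = insert t (Set.range u) ∨ B = Set.range u ∪ Set.range v ∨
     ∃ j : Fin k, B = Set.range (w j))) ∧
  (∑ i, v i) + (∑ j, y j) = ((a : ℝ) + (b : ℝ) - 1) • t ∧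
  (∑ j, y j) + z = (∑ j, u j) ∧
  z + t = 0 ∧
  t + (∑ j, u j) = (∑ j, y j) ∧
  (∑ j, u j) + (∑ i, v i) = ((a : ℝ) + (b : ℝ) - 2) • t ∧
  ∀ j : Fin k, (∑ i, w j i) = (∑ i, A j i)

/-!
The first five primitive collections are the unions of two consecutive families in the cyclic order
`v`, `y`, `z`, `t`, `u`. Hence every facet contains two non-consecutive families entirely and omits
one vertex of each of the other families, and its supporting functional is the solution of the
primitive relations with value one at the vertices it does not omit.

A vertex cannot be removed, because of a suitable solution of the relations: a nonzero one which is
nonpositive at the remaining vertices shows that the origin is not interior, and one which supports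
a facet of the smaller polytope but takes a fractional value at a lattice point contradicts
smoothness.

Suppose that adding a lattice point `w₀` gives a smooth Fano polytope. Then `w₀` lies on no facet
hyperplane. If `w₀` lies beyond exactly one of two adjacent facets, the convex combination of their
functionals with value one at `w₀` supports a facet of the new polytope. Let `c` be the value of the
second functional at the vertex of the first facet outside the second one. Integrality excludes
`c = 0`, and if `c = -1` it forces the two functionals to have sum two at `w₀`. Walls with `c = 0`
connect all facets not of kind `vz`, so `w₀` lies beyond all of these or beyond none. Accordingly
`-w₀` or `w₀` lies in the cone over a facet of kind `vz`, and its coordinates in that cone are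
incompatible with the sum formula at the wall opposite to `z`, where `c = -1`.
-/

section Lattice

variable {n : ℕ}

/-- A linear functional taking integer values on the lattice `ℤ^n`. -/
def LatticeIntegral (f : (Fin n → ℝ) →ₗ[ℝ] ℝ) : Prop :=
  ∀ x, IsLatticePoint x → ∃ m : ℤ, f x = m

theorem isLatticePoint_zero : IsLatticePoint (0 : Fin n → ℝ) := fun _ => ⟨0, by simp⟩

theorem isLatticePoint_single (i : Fin n) : IsLatticePoint (Pi.single i (1 : ℝ)) := fun j =>
  ⟨if j = i then 1 else 0, by simp [Pi.single_apply]⟩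

theorem exists_matrix_map_intCast {b : Fin n → Fin n → ℝ} (hb : ∀ i, IsLatticePoint (b i)) :
    ∃ M : Matrix (Fin n) (Fin n) ℤ, Matrix.of b = M.map (Int.castRingHom ℝ) := by
  choose m hm using hb
  exact ⟨Matrix.of m, by ext i j; simp [hm]⟩

theorem IsLatticePoint.vecMul_map_intCast {x : Fin n → ℝ} (hx : IsLatticePoint x)
    (N : Matrix (Fin n) (Fin n) ℤ) :
    IsLatticePoint (Matrix.vecMul x (N.map (Int.castRingHom ℝ))) := by
  choose m hm using hx
  obtain rfl : x = fun i => (m i : ℝ) := funext hm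
  exact fun i => ⟨Matrix.vecMul m N i, by simp [Matrix.vecMul, dotProduct]⟩

theorem IsUnimodularBasis.exists_dual {S : Set (Fin n → ℝ)} (hS : IsUnimodularBasis S) :
    ∃ b : Fin n → Fin n → ℝ, Set.range b = S ∧
      ∃ g : Fin n → ((Fin n → ℝ) →ₗ[ℝ] ℝ), (∀ i, LatticeIntegral (g i)) ∧
        (∀ i j, g i (b j) = if i = j then 1 else 0) ∧ ∀ x, x = ∑ i, g i x • b i := by
  obtain ⟨b, -, hr, hl, hdet⟩ := hS
  obtain ⟨M, hM⟩ := exists_matrix_map_intCast hl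
  have hunit : IsUnit M.det := by
    rw [hM, ← RingHom.mapMatrix_apply, ← RingHom.map_det, eq_intCast, ← Int.cast_abs] at hdet
    exact Int.isUnit_iff_abs_eq.2 (by exact_mod_cast hdet)
  set N := M⁻¹.map (Int.castRingHom ℝ) with hN
  have hbN : Matrix.of b * N = 1 := by
    rw [hM, hN, ← Matrix.map_mul, Matrix.mul_nonsing_inv _ hunit]; simp
  have hNb : N * Matrix.of b = 1 := mul_eq_one_comm.1 hbN
  refine ⟨b, hr, fun i => LinearMap.proj i ∘ₗ N.vecMulLinear, ?_, ?_, ?_⟩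
  · exact fun i x hx => hx.vecMul_map_intCast _ i
  · intro i j
    have h : Matrix.vecMul (b j) N i = (1 : Matrix (Fin n) (Fin n) ℝ) j i := by
      rw [← hbN, Matrix.mul_apply_eq_vecMul]; rfl
    simpa [Matrix.one_apply, eq_comm] using h
  · intro x
    calc x = Matrix.vecMul (Matrix.vecMul x N) (Matrix.of b) := by
          rw [Matrix.vecMul_vecMul, hNb, Matrix.vecMul_one]
      _ = _ := Matrix.vecMul_eq_sum _ _

theorem isUnimodularBasis_range {b : Fin n → Fin n → ℝ} (hl : ∀ i, IsLatticePoint (b i))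
    {g : Fin n → ((Fin n → ℝ) →ₗ[ℝ] ℝ)} (hg : ∀ i, LatticeIntegral (g i))
    (hgb : ∀ i j, g i (b j) = if i = j then 1 else 0) : IsUnimodularBasis (Set.range b) := by
  refine ⟨b, fun i j hij => ?_, rfl, hl, ?_⟩
  · by_contra h
    simpa [hgb, h] using congrArg (g i) hij
  obtain ⟨M, hM⟩ := exists_matrix_map_intCast hl
  choose c hc using fun i k => hg i _ (isLatticePoint_single k)
  have hMc : M * Matrix.of (fun k i => c i k) = 1 := by
    ext i j
    have h : ∑ k, b i k * c j k = if j = i then 1 else 0 := by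
      rw [← hgb, LinearMap.pi_apply_eq_sum_univ]
      refine Finset.sum_congr rfl fun k _ => ?_
      rw [← hc, smul_eq_mul]
      congr 2; ext q; simp [Pi.single_apply, eq_comm]
    have hMb : ∀ k, (M i k : ℝ) = b i k := fun k => (congrFun₂ hM i k).symm
    simp_rw [← hMb, eq_comm (a := j)] at h
    rw [Matrix.mul_apply, Matrix.one_apply]
    simp only [Matrix.of_apply]
    exact_mod_cast h
  have hu : IsUnit M.det := Matrix.isUnit_det_of_right_inverse hMc
  rw [hM, ← RingHom.mapMatrix_apply, ← RingHom.map_det, eq_intCast, ← Int.cast_abs,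
    Int.isUnit_iff_abs_eq.1 hu, Int.cast_one]

/-! ### Supporting functionals of smooth Fano polytopes -/

theorem exists_pos_add_smul_mem {Q : Set (Fin n → ℝ)} {x : Fin n → ℝ} (hQ : Q ∈ nhds x)
    (v : Fin n → ℝ) : ∃ ε : ℝ, 0 < ε ∧ x + ε • v ∈ Q := by
  have hlim : Filter.Tendsto (fun s : ℝ => x + s • v) (nhdsWithin 0 (Set.Ioi 0)) (nhds x) := by
    have : Continuous fun s : ℝ => x + s • v := by fun_prop
    simpa using (this.tendsto 0).mono_left nhdsWithin_le_nhds
  obtain ⟨ε, hε, hpos⟩ := ((hlim.eventually hQ).and self_mem_nhdsWithin).exists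
  exact ⟨ε, hpos, hε⟩

theorem linearMap_eq_zero_of_nonpos {Q : Set (Fin n → ℝ)} (hQ : (0 : Fin n → ℝ) ∈ interior Q)
    {f : (Fin n → ℝ) →ₗ[ℝ] ℝ} (hf : ∀ x ∈ Q, f x ≤ 0) : f = 0 := by
  have hnonpos : ∀ x, f x ≤ 0 := fun x => by
    obtain ⟨ε, hε, hx⟩ := exists_pos_add_smul_mem (mem_interior_iff_mem_nhds.1 hQ) x
    have := hf _ hx
    rw [zero_add, map_smul, smul_eq_mul] at this
    exact nonpos_of_mul_nonpos_right this hε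
  ext1 i
  ext
  have h₁ := hnonpos (Pi.single i 1)
  have h₂ := hnonpos (-Pi.single i 1)
  rw [map_neg] at h₂
  simp only [LinearMap.comp_apply, LinearMap.single_apply, LinearMap.zero_apply]
  linarith

theorem span_eq_top_of_forall_eq_zero {S : Set (Fin n → ℝ)}
    (hS : ∀ g : (Fin n → ℝ) →ₗ[ℝ] ℝ, (∀ x ∈ S, g x = 0) → g = 0) :
    Submodule.span ℝ S = ⊤ := by
  by_contra h
  obtain ⟨g, hg, hle⟩ := Submodule.exists_le_ker_of_lt_top _ (lt_top_iff_ne_top.2 h)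
  exact hg (hS g fun x hx => hle (Submodule.subset_span hx))

theorem finrank_vectorSpan_add_one (hn : 0 < n) {F : Set (Fin n → ℝ)}
    {f : (Fin n → ℝ) →ₗ[ℝ] ℝ} (hf : ∀ x ∈ F, f x = 1) (hF : Submodule.span ℝ F = ⊤) :
    Module.finrank ℝ (vectorSpan ℝ F) + 1 = n := by
  have hle : vectorSpan ℝ F ≤ LinearMap.ker f := by
    rw [vectorSpan_def, Submodule.span_le]
    rintro _ ⟨x, hx, y, hy, rfl⟩
    simp [hf x hx, hf y hy]
  have hf₀ : f ≠ 0 := by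
    rintro rfl
    obtain rfl : F = ∅ := Set.eq_empty_of_forall_notMem fun x hx => by simpa using hf x hx
    have hdim := Module.finrank_fin_fun ℝ (n := n)
    rw [← finrank_top, ← hF, Submodule.span_empty, finrank_bot] at hdim
    omega
  have hker := Module.Dual.finrank_ker_add_one_of_ne_zero hf₀
  have hge := finrank_vectorSpan_insert_le_set ℝ F 0
  rw [vectorSpan_eq_span_vsub_set_right ℝ (Set.mem_insert 0 F)] at hge
  have himage : (· -ᵥ (0 : Fin n → ℝ)) '' insert 0 F = insert 0 F := by simp
  rw [himage, Submodule.span_insert_zero, hF, finrank_top, Module.finrank_fin_fun] at hge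
  have hmono := Submodule.finrank_mono hle
  rw [Module.finrank_fin_fun] at hker
  omega

/-- A linear functional `f` cutting out the facet `{f = 1}` of the polytope `Q`: it is at most `1`
on the vertices, and the vertices where it equals `1` span the space (no nonzero functional
vanishes on all of them). -/
structure IsFacetFunctional (Q : Set (Fin n → ℝ)) (f : (Fin n → ℝ) →ₗ[ℝ] ℝ) : Prop where
  le_one : ∀ x ∈ vertexSet Q, f x ≤ 1
  sep : ∀ g : (Fin n → ℝ) →ₗ[ℝ] ℝ, (∀ x ∈ vertexSet Q, f x = 1 → g x = 0) → g = 0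

namespace IsSmoothFano

variable {Q : Set (Fin n → ℝ)} (hQ : IsSmoothFano Q)
include hQ

theorem finite_vertexSet : (vertexSet Q).Finite := by
  obtain ⟨S, -, rfl⟩ := hQ.1.1
  exact S.finite_toSet.subset extremePoints_convexHull_subset

theorem convexHull_vertexSet : convexHull ℝ (vertexSet Q) = Q := by
  obtain ⟨S, -, hS⟩ := hQ.1.1
  have hc : IsCompact Q := hS ▸ S.finite_toSet.isCompact_convexHull ℝ
  have hv : Convex ℝ Q := hS ▸ convex_convexHull ℝ _
  rw [← (hQ.finite_vertexSet.isCompact_convexHull ℝ).isClosed.closure_eq]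
  exact closure_convexHull_extremePoints hc hv

theorem le_of_forall_vertexSet_le {f : (Fin n → ℝ) →ₗ[ℝ] ℝ} {r : ℝ}
    (hf : ∀ x ∈ vertexSet Q, f x ≤ r) {x : Fin n → ℝ} (hx : x ∈ Q) : f x ≤ r := by
  rw [← hQ.convexHull_vertexSet] at hx
  exact convexHull_min hf (convex_halfSpace_le f.isLinear r) hx

theorem eq_zero_of_forall_vertexSet_nonneg {f : (Fin n → ℝ) →ₗ[ℝ] ℝ}
    (hf : ∀ x ∈ vertexSet Q, 0 ≤ f x) : f = 0 :=
  neg_eq_zero.1 <| linearMap_eq_zero_of_nonpos hQ.2.1 fun _ hx =>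
    hQ.le_of_forall_vertexSet_le (f := -f) (by simpa using hf) hx

theorem isFacetOf_of_isFacetFunctional (hn : 0 < n) {f : (Fin n → ℝ) →ₗ[ℝ] ℝ}
    (hf : IsFacetFunctional Q f) : IsFacetOf {x ∈ Q | f x = 1} Q := by
  have hle : ∀ x ∈ Q, f x ≤ 1 := fun x hx => hQ.le_of_forall_vertexSet_le hf.le_one hx
  constructor
  · rintro ⟨x₀, hx₀Q, hx₀⟩
    refine ⟨LinearMap.toContinuousLinearMap f, Set.ext fun x => and_congr_right fun hx => ?_⟩
    simp only [LinearMap.coe_toContinuousLinearMap']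
    exact ⟨fun h y hy => h ▸ hle y hy, fun h => le_antisymm (hle x hx) (hx₀ ▸ h x₀ hx₀Q)⟩
  · refine finrank_vectorSpan_add_one hn (fun x hx => hx.2) ?_
    exact span_eq_top_of_forall_eq_zero fun g hg =>
      hf.sep g fun x hx hfx => hg x ⟨extremePoints_subset hx, hfx⟩

theorem isUnimodularBasis_of_isFacetFunctional (hn : 0 < n) {f : (Fin n → ℝ) →ₗ[ℝ] ℝ}
    (hf : IsFacetFunctional Q f) : IsUnimodularBasis {x ∈ vertexSet Q | f x = 1} := by
  convert hQ.2.2 _ (hQ.isFacetOf_of_isFacetFunctional hn hf) using 1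
  ext x
  exact and_congr_right fun hx => (and_iff_right (extremePoints_subset hx)).symm

theorem latticeIntegral_of_isFacetFunctional (hn : 0 < n) {f : (Fin n → ℝ) →ₗ[ℝ] ℝ}
    (hf : IsFacetFunctional Q f) : LatticeIntegral f := by
  obtain ⟨b, hb, g, hg, -, hexp⟩ := (hQ.isUnimodularBasis_of_isFacetFunctional hn hf).exists_dual
  have hfb : ∀ i, f (b i) = 1 := fun i => ((Set.ext_iff.1 hb (b i)).1 ⟨i, rfl⟩).2
  intro x hx
  choose m hm using fun i => hg i x hx
  exact ⟨∑ i, m i, by rw [hexp x, map_sum]; simp [hfb, hm]⟩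

theorem exists_dual_of_isFacetFunctional (hn : 0 < n) {f : (Fin n → ℝ) →ₗ[ℝ] ℝ}
    (hf : IsFacetFunctional Q f) {s : Fin n → ℝ} (hs : s ∈ vertexSet Q) (hfs : f s = 1) :
    ∃ g : (Fin n → ℝ) →ₗ[ℝ] ℝ, g s = 1 ∧ ∀ x ∈ vertexSet Q, f x = 1 → x ≠ s → g x = 0 := by
  obtain ⟨b, hb, g, -, hgb, -⟩ := (hQ.isUnimodularBasis_of_isFacetFunctional hn hf).exists_dual
  obtain ⟨i, rfl⟩ : s ∈ Set.range b := hb ▸ ⟨hs, hfs⟩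
  refine ⟨g i, by simp [hgb], fun x hx hfx hne => ?_⟩
  obtain ⟨j, rfl⟩ : x ∈ Set.range b := hb ▸ ⟨hx, hfx⟩
  have hij : i ≠ j := by
    rintro rfl
    exact hne rfl
  rw [hgb, if_neg hij]

end IsSmoothFano

theorem IsFaceOf.eq_convexHull_inter {S F : Set (Fin n → ℝ)} (hS : S.Finite)
    (hF : IsFaceOf F (convexHull ℝ S)) : F = convexHull ℝ (S ∩ F) := by
  have hcompact : IsCompact F := IsExposed.isCompact hF (hS.isCompact_convexHull ℝ)
  have hconvex : Convex ℝ F := IsExposed.convex hF (convex_convexHull ℝ S)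
  have hsub : Set.extremePoints ℝ F ⊆ S ∩ F := fun x hx =>
    ⟨extremePoints_convexHull_subset
      ((IsExposed.isExtreme hF).extremePoints_subset_extremePoints hx), extremePoints_subset hx⟩
  refine Set.Subset.antisymm ?_ (convexHull_min Set.inter_subset_right hconvex)
  calc F = closure (convexHull ℝ (Set.extremePoints ℝ F)) :=
        (closure_convexHull_extremePoints hcompact hconvex).symm
    _ ⊆ closure (convexHull ℝ (S ∩ F)) := closure_mono (convexHull_mono hsub)
    _ = convexHull ℝ (S ∩ F) :=
        ((hS.subset Set.inter_subset_left).isCompact_convexHull ℝ).isClosed.closure_eq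

end Lattice

/-! ### Facet systems -/

/-- The facets indexed by `φ` and `φ'` are adjacent, `φ'` being reached from `φ` by crossing the
wall opposite to the vertex `p i`. -/
def CrossesWall {n : ℕ} {I Φ : Type*} (p : I → Fin n → ℝ) (f : Φ → (Fin n → ℝ) →ₗ[ℝ] ℝ)
    (φ φ' : Φ) (i : I) : Prop :=
  f φ (p i) = 1 ∧ f φ' (p i) < 1 ∧ ∀ j ≠ i, f φ (p j) = 1 → f φ' (p j) = 1

/-- Linear functionals `f φ` bounded by one on a configuration `p` of lattice points, whose contact
sets `{i | f φ (p i) = 1}` are lattice bases (given by their dual bases) and are linked by wall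
crossings. They are the facet functionals of the smooth Fano polytope spanned by `p`. -/
structure FacetSystem {n : ℕ} {I Φ : Type*} (p : I → Fin n → ℝ)
    (f : Φ → (Fin n → ℝ) →ₗ[ℝ] ℝ) : Prop where
  lattice : ∀ i, IsLatticePoint (p i)
  le_one : ∀ φ i, f φ (p i) ≤ 1
  dual : ∀ φ i, f φ (p i) = 1 → ∃ g : (Fin n → ℝ) →ₗ[ℝ] ℝ, LatticeIntegral g ∧ g (p i) = 1 ∧
    ∀ j, f φ (p j) = 1 → j ≠ i → g (p j) = 0
  sep : ∀ φ (g : (Fin n → ℝ) →ₗ[ℝ] ℝ), (∀ i, f φ (p i) = 1 → g (p i) = 0) → g = 0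
  wall : ∀ φ i, f φ (p i) = 1 → ∃ φ', CrossesWall p f φ φ' i
  cover : ∀ i, ∃ φ, f φ (p i) = 1

namespace FacetSystem

variable {n : ℕ} {I Φ : Type*} {p : I → Fin n → ℝ} {f : Φ → (Fin n → ℝ) →ₗ[ℝ] ℝ}

theorem injective (h : FacetSystem p f) : Function.Injective p := by
  intro i j hij
  by_contra hne
  obtain ⟨φ, hφ⟩ := h.cover i
  obtain ⟨g, -, hgi, hg⟩ := h.dual φ i hφ
  have hgj := hg j (hij ▸ hφ) (Ne.symm hne)
  rw [← hij, hgi] at hgj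
  exact one_ne_zero hgj

open Classical in
/-- The coordinate along `p i` in the lattice basis formed by the contact set of `f φ`; it is zero
if `p i` does not belong to that basis. -/
noncomputable def coord (h : FacetSystem p f) (φ : Φ) (i : I) : (Fin n → ℝ) →ₗ[ℝ] ℝ :=
  if hi : f φ (p i) = 1 then (h.dual φ i hi).choose else 0

section Coordinates

variable (h : FacetSystem p f) {φ φ' : Φ} {i j : I}

theorem latticeIntegral_coord : LatticeIntegral (h.coord φ i) := by
  unfold coord
  split_ifs with hi
  · exact (h.dual φ i hi).choose_spec.1
  · exact fun x _ => ⟨0, by simp⟩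

theorem coord_eq_zero (hi : f φ (p i) ≠ 1) : h.coord φ i = 0 := dif_neg hi

theorem coord_self (hi : f φ (p i) = 1) : h.coord φ i (p i) = 1 := by
  rw [coord, dif_pos hi]
  exact (h.dual φ i hi).choose_spec.2.1

theorem coord_of_ne (hj : f φ (p j) = 1) (hij : i ≠ j) : h.coord φ i (p j) = 0 := by
  unfold coord
  split_ifs with hi
  · exact (h.dual φ i hi).choose_spec.2.2 j hj hij.symm
  · rfl

include h in
theorem ext_of_contact {g g' : (Fin n → ℝ) →ₗ[ℝ] ℝ}
    (hg : ∀ j, f φ (p j) = 1 → g (p j) = g' (p j)) : g = g' :=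
  sub_eq_zero.1 <| h.sep φ _ fun j hj => by simp [hg j hj]

theorem eq_smul_coord {g : (Fin n → ℝ) →ₗ[ℝ] ℝ} (hi : f φ (p i) = 1)
    (hg : ∀ j ≠ i, f φ (p j) = 1 → g (p j) = 0) : g = g (p i) • h.coord φ i := by
  refine h.ext_of_contact (φ := φ) fun j hj => ?_
  rcases eq_or_ne j i with rfl | hji
  · simp [h.coord_self hi]
  · simp [hg j hji hj, h.coord_of_ne hj hji.symm]

theorem sub_eq_smul_coord (hw : CrossesWall p f φ φ' i) :
    f φ' - f φ = (f φ' (p i) - 1) • h.coord φ i := by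
  have := h.eq_smul_coord (g := f φ' - f φ) hw.1 fun j hji hj => by simp [hj, hw.2.2 j hji hj]
  simpa [hw.1] using this

theorem coord_nonneg_of_forall_le {x : Fin n → ℝ} (hmax : ∀ φ', f φ' x ≤ f φ x) :
    0 ≤ h.coord φ i x := by
  by_cases hi : f φ (p i) = 1
  · obtain ⟨φ', hw⟩ := h.wall φ i hi
    have hdiff := LinearMap.congr_fun (h.sub_eq_smul_coord hw) x
    simp only [LinearMap.sub_apply, LinearMap.smul_apply, smul_eq_mul] at hdiff
    exact nonneg_of_mul_nonpos_right (hdiff ▸ sub_nonpos.2 (hmax φ')) (sub_neg.2 hw.2.1)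
  · simp [h.coord_eq_zero hi]

section Sum

variable [Fintype I]

theorem apply_eq_sum_coord (φ : Φ) (g : (Fin n → ℝ) →ₗ[ℝ] ℝ) (x : Fin n → ℝ) :
    g x = ∑ i, h.coord φ i x * g (p i) := by
  have hg : g = ∑ i, g (p i) • h.coord φ i := by
    refine h.ext_of_contact (φ := φ) fun j hj => ?_
    rw [LinearMap.sum_apply, Finset.sum_eq_single j]
    · simp [h.coord_self hj]
    · intro i _ hij
      simp [h.coord_of_ne hj hij]
    · simp
  conv_lhs => rw [hg]
  simp [mul_comm]

theorem sum_coord_smul (φ : Φ) (x : Fin n → ℝ) : ∑ i, h.coord φ i x • p i = x := by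
  ext q
  simpa using (h.apply_eq_sum_coord φ (LinearMap.proj q) x).symm

theorem sum_coord (φ : Φ) (x : Fin n → ℝ) : ∑ i, h.coord φ i x = f φ x := by
  rw [h.apply_eq_sum_coord φ (f φ) x]
  refine Finset.sum_congr rfl fun i _ => ?_
  by_cases hi : f φ (p i) = 1
  · rw [hi, mul_one]
  · simp [h.coord_eq_zero hi]

end Sum

variable [Finite I]

include h in
theorem latticeIntegral (φ : Φ) : LatticeIntegral (f φ) := by
  have := Fintype.ofFinite I
  intro x hx
  choose m hm using fun i => h.latticeIntegral_coord (φ := φ) (i := i) x hx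
  exact ⟨∑ i, m i, by simp [← h.sum_coord φ x, hm]⟩

include h in
theorem nonpos_of_ne_one (hi : f φ (p i) ≠ 1) : f φ (p i) ≤ 0 := by
  obtain ⟨m, hm⟩ := h.latticeIntegral φ _ (h.lattice i)
  have hlt : (m : ℝ) < 1 := hm ▸ lt_of_le_of_ne (h.le_one φ i) hi
  rw [hm]
  exact_mod_cast Int.lt_add_one_iff.1 (by exact_mod_cast hlt : m < 0 + 1)

end Coordinates

section Polytope

variable [Finite I]

theorem linearIndependent_contact (h : FacetSystem p f) (φ : Φ) :
    LinearIndependent ℝ fun i : {i // f φ (p i) = 1} => p i := by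
  classical
  have := Fintype.ofFinite I
  rw [Fintype.linearIndependent_iff]
  intro c hc i
  have hi := congrArg (h.coord φ i) hc
  rw [map_sum, map_zero, Finset.sum_eq_single i] at hi
  · simpa [h.coord_self i.2] using hi
  · intro j _ hji
    rw [map_smul, h.coord_of_ne j.2 (Subtype.coe_ne_coe.2 hji.symm), smul_zero]
  · simp

theorem ncard_contact (h : FacetSystem p f) (φ : Φ) : {i | f φ (p i) = 1}.ncard = n := by
  classical
  have := Fintype.ofFinite I
  have hspan : Submodule.span ℝ (Set.range fun i : {i // f φ (p i) = 1} => p i) = ⊤ := by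
    refine span_eq_top_of_forall_eq_zero fun g hg => h.sep φ g fun i hi => ?_
    exact hg _ ⟨⟨i, hi⟩, rfl⟩
  have hcard := finrank_span_eq_card (h.linearIndependent_contact φ)
  rw [hspan, finrank_top, Module.finrank_fin_fun] at hcard
  rw [← Nat.card_coe_set_eq, Nat.card_eq_fintype_card]
  exact hcard.symm

theorem isUnimodularBasis_contact (h : FacetSystem p f) (φ : Φ) :
    IsUnimodularBasis (p '' {i | f φ (p i) = 1}) := by
  have e : Fin n ≃ {i | f φ (p i) = 1} :=
    ((Finite.equivFin _).trans (finCongr ((Nat.card_coe_set_eq _).trans (h.ncard_contact φ)))).symm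
  have hrange : p '' {i | f φ (p i) = 1} = Set.range fun q => p (e q) := by
    rw [Set.image_eq_range, ← e.surjective.range_comp]
    rfl
  rw [hrange]
  refine isUnimodularBasis_range (fun q => h.lattice _) (g := fun q => h.coord φ (e q))
    (fun q => h.latticeIntegral_coord) fun q r => ?_
  split_ifs with hqr
  · exact hqr ▸ h.coord_self (e q).2
  · exact h.coord_of_ne (e r).2 fun h' => hqr (e.injective (Subtype.ext h'))

variable [Nonempty Φ]

theorem nonempty_index (h : FacetSystem p f) (hn : 0 < n) : Nonempty I := by
  have hcard := h.ncard_contact (Classical.arbitrary Φ)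
  obtain ⟨i, -⟩ := Set.nonempty_of_ncard_ne_zero (hcard.trans_ne hn.ne')
  exact ⟨i⟩

variable [Finite Φ]

theorem zero_mem_convexHull (h : FacetSystem p f) (hn : 0 < n) :
    (0 : Fin n → ℝ) ∈ convexHull ℝ (Set.range p) := by
  classical
  have := Fintype.ofFinite I
  obtain ⟨i₀⟩ := h.nonempty_index hn
  obtain ⟨φ, hmax⟩ := Finite.exists_max fun φ => f φ (-p i₀)
  set c : I → ℝ := fun i => h.coord φ i (-p i₀) + if i = i₀ then 1 else 0
  have hnonneg : ∀ i, 0 ≤ h.coord φ i (-p i₀) := fun i => h.coord_nonneg_of_forall_le hmax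
  have hc : ∀ i, 0 ≤ c i := fun i => add_nonneg (hnonneg i) (by split_ifs <;> norm_num)
  have hpos : 0 < ∑ i, c i := by
    rw [Finset.sum_add_distrib, Finset.sum_ite_eq' Finset.univ i₀, if_pos (Finset.mem_univ _)]
    linarith [Finset.sum_nonneg fun i (_ : i ∈ Finset.univ) => hnonneg i]
  have hzero : ∑ i, c i • p i = 0 := by
    simp only [c, add_smul, Finset.sum_add_distrib, h.sum_coord_smul, ite_smul, one_smul,
      zero_smul, Finset.sum_ite_eq', Finset.mem_univ, if_true, neg_add_cancel]
  have hmem := Finset.univ.centerMass_mem_convexHull (fun i _ => hc i) hpos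
    fun i _ => Set.mem_range_self (f := p) i
  rwa [Finset.centerMass, hzero, smul_zero] at hmem

theorem mem_convexHull_of_le (h : FacetSystem p f) (hn : 0 < n) {x : Fin n → ℝ}
    (hx : ∀ φ, f φ x ≤ 1) : x ∈ convexHull ℝ (Set.range p) := by
  have := Fintype.ofFinite I
  obtain ⟨φ, hmax⟩ := Finite.exists_max fun φ => f φ x
  have hc : ∀ i, 0 ≤ h.coord φ i x := fun i => h.coord_nonneg_of_forall_le hmax
  have hsum := h.sum_coord_smul φ x
  have hle : ∑ i, h.coord φ i x ≤ 1 := h.sum_coord φ x ▸ hx φ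
  rcases (Finset.sum_nonneg fun i (_ : i ∈ Finset.univ) => hc i).eq_or_lt with h₀ | hpos
  · have hzero := (Finset.sum_eq_zero_iff_of_nonneg fun i _ => hc i).1 h₀.symm
    rw [← hsum, Finset.sum_eq_zero fun i hi => by rw [hzero i hi, zero_smul]]
    exact h.zero_mem_convexHull hn
  · have hmem := (convex_convexHull ℝ _).smul_mem_of_zero_mem (h.zero_mem_convexHull hn)
      (Finset.univ.centerMass_mem_convexHull (fun i _ => hc i) hpos
        fun i _ => Set.mem_range_self (f := p) i) ⟨hpos.le, hle⟩
    rwa [Finset.centerMass, smul_inv_smul₀ hpos.ne', hsum] at hmem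

theorem zero_mem_interior (h : FacetSystem p f) (hn : 0 < n) :
    (0 : Fin n → ℝ) ∈ interior (convexHull ℝ (Set.range p)) := by
  rw [mem_interior]
  refine ⟨⋂ φ, {x | f φ x < 1}, fun x hx => ?_, ?_, by simp⟩
  · exact h.mem_convexHull_of_le hn fun φ => (Set.mem_iInter.1 hx φ).le
  · exact isOpen_iInter_of_finite fun φ =>
      isOpen_lt (LinearMap.continuous_of_finiteDimensional (f φ)) continuous_const

theorem eq_zero_of_mem_interior (h : FacetSystem p f) {x : Fin n → ℝ} (hl : IsLatticePoint x)
    (hx : x ∈ interior (convexHull ℝ (Set.range p))) : x = 0 := by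
  have := Fintype.ofFinite I
  obtain ⟨φ, hmax⟩ := Finite.exists_max fun φ => f φ x
  have hc : ∀ i, 0 ≤ h.coord φ i x := fun i => h.coord_nonneg_of_forall_le hmax
  obtain ⟨ε, hε, hmem⟩ := exists_pos_add_smul_mem (mem_interior_iff_mem_nhds.1 hx) x
  have hle : f φ (x + ε • x) ≤ 1 := convexHull_min
    (by rintro _ ⟨i, rfl⟩; exact h.le_one φ i) (convex_halfSpace_le (f φ).isLinear 1) hmem
  rw [map_add, map_smul, smul_eq_mul] at hle
  have hnonneg : 0 ≤ f φ x := h.sum_coord φ x ▸ Finset.sum_nonneg fun i _ => hc i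
  have hlt : f φ x < 1 := by nlinarith
  have hzero : f φ x = 0 := by
    obtain ⟨m, hm⟩ := h.latticeIntegral φ x hl
    rw [hm] at hnonneg hlt ⊢
    have h₁ : 0 ≤ m := by exact_mod_cast hnonneg
    have h₂ : m < 1 := by exact_mod_cast hlt
    exact_mod_cast (by omega : m = 0)
  have hcoord := (Finset.sum_eq_zero_iff_of_nonneg fun i _ => hc i).1
    ((h.sum_coord φ x).trans hzero)
  rw [← h.sum_coord_smul φ x]
  exact Finset.sum_eq_zero fun i hi => by rw [hcoord i hi, zero_smul]

end Polytope

end FacetSystem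

theorem finrank_vectorSpan_convexHull_lt_ncard {n : ℕ} {S : Set (Fin n → ℝ)} (hS : S.Finite)
    (hne : S.Nonempty) : Module.finrank ℝ (vectorSpan ℝ (convexHull ℝ S)) < S.ncard := by
  classical
  obtain ⟨m, hm⟩ := Nat.exists_eq_succ_of_ne_zero ((Set.ncard_pos hS).2 hne).ne'
  have hle := finrank_vectorSpan_image_finset_le ℝ id hS.toFinset
    ((Set.ncard_eq_toFinset_card S hS).symm.trans hm)
  rw [Finset.image_id, hS.coe_toFinset] at hle
  rw [← direction_affineSpan, affineSpan_convexHull, direction_affineSpan]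
  omega

namespace FacetSystem

section Faces

variable {n : ℕ} {I Φ : Type*} {p : I → Fin n → ℝ} {f : Φ → (Fin n → ℝ) →ₗ[ℝ] ℝ} [Finite I]

theorem exists_max_iff_mem (h : FacetSystem p f) {φ : Φ} {A : Set I}
    (hA : ∀ i ∈ A, f φ (p i) = 1) :
    ∃ (g : (Fin n → ℝ) →ₗ[ℝ] ℝ) (N : ℝ), ∀ i, g (p i) ≤ N ∧ (g (p i) = N ↔ i ∈ A) := by
  classical
  have := Fintype.ofFinite I
  set e : (Fin n → ℝ) →ₗ[ℝ] ℝ := ∑ i with i ∉ A, h.coord φ i with he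
  have hcontact : ∀ i, f φ (p i) = 1 → e (p i) = if i ∈ A then 0 else 1 := fun i hi => by
    rw [he, LinearMap.sum_apply, Finset.sum_filter, Finset.sum_eq_single i]
    · by_cases hiA : i ∈ A <;> simp [hiA, h.coord_self hi]
    · exact fun j _ hji => by rw [h.coord_of_ne hi hji, ite_self]
    · simp
  obtain ⟨N, hN⟩ := (Set.finite_range fun i => -e (p i)).bddAbove
  have hpos : (0 : ℝ) < max N 0 + 1 := by positivity
  have hlt : ∀ i, -e (p i) < max N 0 + 1 := fun i =>
    ((hN ⟨i, rfl⟩).trans (le_max_left _ _)).trans_lt (lt_add_one _)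
  refine ⟨(max N 0 + 1) • f φ - e, max N 0 + 1, fun i => ?_⟩
  simp only [LinearMap.sub_apply, LinearMap.smul_apply, smul_eq_mul]
  by_cases hi : f φ (p i) = 1
  · rw [hcontact i hi, hi]
    by_cases hiA : i ∈ A <;> simp [hiA]
  · have hoff := mul_nonpos_of_nonneg_of_nonpos hpos.le (h.nonpos_of_ne_one hi)
    have := hlt i
    exact ⟨by linarith, fun _ => by linarith, fun hiA => absurd (hA i hiA) hi⟩

theorem isFaceOf_of_subset_contact (h : FacetSystem p f) {φ : Φ} {A : Set I}
    (hA : ∀ i ∈ A, f φ (p i) = 1) :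
    IsFaceOf (convexHull ℝ (p '' A)) (convexHull ℝ (Set.range p)) := by
  intro hne
  obtain ⟨_, i₀, hi₀, rfl⟩ := convexHull_nonempty_iff.1 hne
  obtain ⟨g, N, hg⟩ := h.exists_max_iff_mem hA
  have hle : ∀ x ∈ convexHull ℝ (Set.range p), g x ≤ N := fun x hx =>
    convexHull_min (by rintro _ ⟨i, rfl⟩; exact (hg i).1) (convex_halfSpace_le g.isLinear N) hx
  have hp : ∀ i, p i ∈ convexHull ℝ (Set.range p) := fun i => subset_convexHull ℝ _ ⟨i, rfl⟩
  refine ⟨LinearMap.toContinuousLinearMap g, ?_⟩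
  rw [IsFaceOf.eq_convexHull_inter (F := {x ∈ _ | _}) (Set.finite_range p) fun _ => ⟨_, rfl⟩]
  congr 1
  ext x
  constructor
  · rintro ⟨i, hi, rfl⟩
    exact ⟨⟨i, rfl⟩, hp i, fun y hy => (hle y hy).trans_eq ((hg i).2.2 hi).symm⟩
  · rintro ⟨⟨i, rfl⟩, -, hmax⟩
    exact ⟨i, (hg i).2.1 (le_antisymm (hg i).1 (((hg i₀).2.2 hi₀).symm.trans_le
      (hmax _ (hp i₀)))), rfl⟩

theorem vertexSet_eq (h : FacetSystem p f) :
    vertexSet (convexHull ℝ (Set.range p)) = Set.range p := by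
  refine Set.Subset.antisymm extremePoints_convexHull_subset ?_
  rintro _ ⟨i, rfl⟩
  obtain ⟨φ, hφ⟩ := h.cover i
  have hface := h.isFaceOf_of_subset_contact (φ := φ) (A := {i}) (by simpa using hφ)
  rw [Set.image_singleton, convexHull_singleton] at hface
  exact isExtreme_singleton.1 (IsExposed.isExtreme hface)

variable [Finite Φ] [Nonempty Φ]

theorem exists_subset_contact_of_max (h : FacetSystem p f) {e : (Fin n → ℝ) →ₗ[ℝ] ℝ} {m : ℝ}
    (hm : 0 < m) (hle : ∀ i, e (p i) ≤ m) {A : Set I} (hA : ∀ i ∈ A, e (p i) = m) :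
    ∃ φ, ∀ i ∈ A, f φ (p i) = 1 := by
  classical
  have := Fintype.ofFinite I
  obtain ⟨φ, hmax⟩ := Finite.exists_max fun φ => f φ (∑ i with i ∈ A, p i)
  refine ⟨φ, ?_⟩
  have hcard : m * ∑ i with i ∈ A, (1 : ℝ) ≤ m * ∑ i with i ∈ A, f φ (p i) := calc
    m * ∑ i with i ∈ A, (1 : ℝ) = e (∑ i with i ∈ A, p i) := by
      rw [map_sum, Finset.mul_sum, mul_one]
      exact Finset.sum_congr rfl fun i hi => (hA i (Finset.mem_filter.1 hi).2).symm
    _ = ∑ j, h.coord φ j (∑ i with i ∈ A, p i) * e (p j) := h.apply_eq_sum_coord φ e _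
    _ ≤ ∑ j, h.coord φ j (∑ i with i ∈ A, p i) * m := Finset.sum_le_sum fun j _ =>
      mul_le_mul_of_nonneg_left (hle j) (h.coord_nonneg_of_forall_le hmax)
    _ = m * ∑ i with i ∈ A, f φ (p i) := by
      rw [← Finset.sum_mul, h.sum_coord, map_sum, mul_comm]
  have heq := (Finset.sum_eq_sum_iff_of_le fun i _ => h.le_one φ i).1 <|
    le_antisymm (Finset.sum_le_sum fun i _ => h.le_one φ i) (le_of_mul_le_mul_left hcard hm)
  exact fun i hi => heq i (Finset.mem_filter.2 ⟨Finset.mem_univ i, hi⟩)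

theorem exists_eq_one_of_isFaceOf (h : FacetSystem p f) (hn : 0 < n) {G : Set (Fin n → ℝ)}
    (hG : IsFaceOf G (convexHull ℝ (Set.range p))) (hproper : G ≠ convexHull ℝ (Set.range p)) :
    ∃ φ, ∀ x ∈ G, f φ x = 1 := by
  rcases G.eq_empty_or_nonempty with rfl | ⟨x, hx⟩
  · exact ⟨Classical.arbitrary Φ, by simp⟩
  obtain ⟨e, he⟩ := hG ⟨x, hx⟩
  have hmax : ∀ y ∈ convexHull ℝ (Set.range p), e y ≤ e x := (he ▸ hx).2
  have hpos : 0 < e x := by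
    by_contra hneg
    have hzero := linearMap_eq_zero_of_nonpos (f := e) (h.zero_mem_interior hn)
      fun y hy => (hmax y hy).trans (not_lt.1 hneg)
    refine hproper (he.trans (Set.ext fun y => and_iff_left fun y' _ => ?_))
    exact (LinearMap.congr_fun hzero y').trans_le (LinearMap.congr_fun hzero y).ge
  obtain ⟨φ, hφ⟩ := h.exists_subset_contact_of_max (e := e) hpos
    (fun i => hmax _ (subset_convexHull ℝ _ ⟨i, rfl⟩)) (A := {i | p i ∈ G}) fun i hi =>
      have hi' := he ▸ hi
      le_antisymm (hmax _ hi'.1) (hi'.2 _ (he ▸ hx).1)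
  refine ⟨φ, fun y hy => ?_⟩
  rw [hG.eq_convexHull_inter (Set.finite_range p)] at hy
  exact convexHull_min (t := {x | f φ x = 1}) (by rintro _ ⟨⟨i, rfl⟩, hi⟩; exact hφ i hi)
    (convex_hyperplane (f φ).isLinear 1) hy

theorem affineSpan_convexHull_eq_top (h : FacetSystem p f) (hn : 0 < n) :
    affineSpan ℝ (convexHull ℝ (Set.range p)) = ⊤ :=
  (convex_convexHull ℝ _).interior_nonempty_iff_affineSpan_eq_top.1 ⟨0, h.zero_mem_interior hn⟩

theorem exists_vertexSet_inter_eq_image_contact (h : FacetSystem p f) (hn : 2 ≤ n)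
    {F : Set (Fin n → ℝ)} (hF : IsFacetOf F (convexHull ℝ (Set.range p))) :
    ∃ φ, vertexSet (convexHull ℝ (Set.range p)) ∩ F = p '' {i | f φ (p i) = 1} := by
  obtain ⟨hface, hrank⟩ := hF
  have hproper : F ≠ convexHull ℝ (Set.range p) := by
    rintro rfl
    rw [← direction_affineSpan, h.affineSpan_convexHull_eq_top (by omega),
      AffineSubspace.direction_top, finrank_top, Module.finrank_fin_fun] at hrank
    omega
  obtain ⟨φ, hφ⟩ := h.exists_eq_one_of_isFaceOf (by omega) hface hproper
  have hconv := hface.eq_convexHull_inter (Set.finite_range p)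
  have hfin : (Set.range p ∩ F).Finite := (Set.finite_range p).inter_of_left F
  have hne : (Set.range p ∩ F).Nonempty := by
    rw [← convexHull_nonempty_iff (𝕜 := ℝ), ← hconv, Set.nonempty_iff_ne_empty]
    rintro rfl
    rw [vectorSpan_empty, finrank_bot] at hrank
    omega
  have hcard := finrank_vectorSpan_convexHull_lt_ncard hfin hne
  rw [← hconv] at hcard
  refine ⟨φ, h.vertexSet_eq.symm ▸ Set.eq_of_subset_of_ncard_le ?_ ?_ (Set.toFinite _)⟩
  · rintro _ ⟨⟨i, rfl⟩, hi⟩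
    exact ⟨i, hφ _ hi, rfl⟩
  · rw [Set.ncard_image_of_injective _ h.injective, h.ncard_contact]
    omega

theorem isSmoothFano (h : FacetSystem p f) (hn : 2 ≤ n) :
    IsSmoothFano (convexHull ℝ (Set.range p)) := by
  have hn₀ : 0 < n := by omega
  refine ⟨⟨⟨(Set.finite_range p).toFinset, by simpa using h.lattice, by simp⟩,
    h.affineSpan_convexHull_eq_top hn₀⟩, h.zero_mem_interior hn₀, fun F hF => ?_⟩
  obtain ⟨φ, hφ⟩ := h.exists_vertexSet_inter_eq_image_contact hn hF
  exact hφ ▸ h.isUnimodularBasis_contact φ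

theorem isFaceOf_image_iff (h : FacetSystem p f) (hn : 0 < n) {A : Set I} (hA : A ≠ Set.univ) :
    IsFaceOf (convexHull ℝ (p '' A)) (convexHull ℝ (Set.range p)) ↔
      ∃ φ, ∀ i ∈ A, f φ (p i) = 1 := by
  refine ⟨fun hface => ?_, fun ⟨φ, hφ⟩ => h.isFaceOf_of_subset_contact hφ⟩
  have hproper : convexHull ℝ (p '' A) ≠ convexHull ℝ (Set.range p) := fun heq =>
    hA <| Set.eq_univ_of_forall fun i => h.injective.mem_set_image.1 <|
      extremePoints_convexHull_subset (𝕜 := ℝ) <| by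
        rw [heq]
        exact h.vertexSet_eq.symm.subset ⟨i, rfl⟩
  obtain ⟨φ, hφ⟩ := h.exists_eq_one_of_isFaceOf hn hface hproper
  exact ⟨φ, fun i hi => hφ _ (subset_convexHull ℝ _ ⟨i, hi, rfl⟩)⟩

theorem isPrimitiveCollection_image_iff (h : FacetSystem p f) (hn : 0 < n) {A : Set I} :
    IsPrimitiveCollection (convexHull ℝ (Set.range p)) (p '' A) ↔
      A ≠ Set.univ ∧ (¬ ∃ φ, ∀ i ∈ A, f φ (p i) = 1) ∧
        ∀ x ∈ A, ∃ φ, ∀ i ∈ A \ {x}, f φ (p i) = 1 := by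
  have hdiff : ∀ x, p '' A \ {p x} = p '' (A \ {x}) := fun x => by
    rw [← Set.image_singleton, ← Set.image_sdiff h.injective]
  have hne : ∀ x, A \ {x} ≠ Set.univ := fun x hx => (hx.symm ▸ Set.mem_univ x : x ∈ A \ {x}).2 rfl
  simp only [IsPrimitiveCollection, h.vertexSet_eq, Set.image_nonempty, Set.image_subset_range,
    Set.forall_mem_image, hdiff, h.isFaceOf_image_iff hn (hne _), true_and]
  rcases eq_or_ne A Set.univ with rfl | hA
  · simp only [Set.image_univ, ne_eq, not_true_eq_false, false_and, iff_false, not_and]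
    exact fun _ hnot => absurd (IsExposed.refl _) hnot
  rw [h.isFaceOf_image_iff hn hA]
  refine ⟨fun ⟨_, hnot, hall⟩ => ⟨hA, hnot, hall⟩, fun ⟨_, hnot, hall⟩ => ⟨?_, hnot, hall⟩⟩
  rw [Set.nonempty_iff_ne_empty]
  rintro rfl
  exact hnot ⟨Classical.arbitrary Φ, by simp⟩

end Faces

end FacetSystem

/-! ### Adding a vertex -/

/-- `Q` is a smooth Fano polytope whose vertices are the points of the configuration `p` together
with one further point `w₀`. -/
structure IsVertexAddition {n : ℕ} {I : Type*} (p : I → Fin n → ℝ) (Q : Set (Fin n → ℝ))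
    (w₀ : Fin n → ℝ) : Prop where
  isSmoothFano : IsSmoothFano Q
  notMem : w₀ ∉ Set.range p
  vertexSet_eq : vertexSet Q = Set.range p ∪ {w₀}

theorem exists_convexCombination_eq_one {x y : ℝ} (hxy : (x - 1) * (y - 1) < 0) :
    ∃ s : ℝ, 0 < s ∧ s < 1 ∧ (1 - s) * x + s * y = 1 := by
  have hne : x - y ≠ 0 := by
    intro h
    obtain rfl : x = y := sub_eq_zero.1 h
    exact (mul_self_nonneg _).not_gt hxy
  have hpos : 0 < (x - y) ^ 2 := by positivity
  refine ⟨(x - 1) * (x - y) / (x - y) ^ 2, ?_, ?_, by field_simp; ring⟩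
  · exact div_pos (by nlinarith [sq_nonneg (x - 1)]) hpos
  · rw [div_lt_one hpos]
    nlinarith [sq_nonneg (y - 1)]

namespace IsVertexAddition

variable {n : ℕ} {I Φ : Type*} {p : I → Fin n → ℝ} {f : Φ → (Fin n → ℝ) →ₗ[ℝ] ℝ}
  {Q : Set (Fin n → ℝ)} {w₀ : Fin n → ℝ} (hadd : IsVertexAddition p Q w₀) (h : FacetSystem p f)
  {φ φ' : Φ} {i : I}
include hadd

theorem apply_mem_vertexSet (i : I) : p i ∈ vertexSet Q := hadd.vertexSet_eq ▸ Or.inl ⟨i, rfl⟩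

theorem self_mem_vertexSet : w₀ ∈ vertexSet Q := hadd.vertexSet_eq ▸ Or.inr rfl

theorem isFacetFunctional {g : (Fin n → ℝ) →ₗ[ℝ] ℝ} (hle : ∀ i, g (p i) ≤ 1) (hw : g w₀ = 1)
    (hsep : ∀ e : (Fin n → ℝ) →ₗ[ℝ] ℝ, (∀ i, g (p i) = 1 → e (p i) = 0) → e w₀ = 0 → e = 0) :
    IsFacetFunctional Q g where
  le_one x hx := by
    obtain ⟨i, rfl⟩ | rfl := hadd.vertexSet_eq ▸ hx
    exacts [hle i, hw.le]
  sep e he := hsep e (fun i hi => he _ (hadd.apply_mem_vertexSet i) hi)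
    (he _ hadd.self_mem_vertexSet hw)

theorem exists_one_lt [Finite I] [Finite Φ] [Nonempty Φ] (h : FacetSystem p f) (hn : 0 < n) :
    ∃ φ, 1 < f φ w₀ := by
  by_contra! hle
  have hQ : Q = convexHull ℝ (Set.range p) := by
    rw [← hadd.isSmoothFano.convexHull_vertexSet, hadd.vertexSet_eq]
    refine Set.Subset.antisymm (convexHull_min ?_ (convex_convexHull ℝ _))
      (convexHull_mono Set.subset_union_left)
    exact Set.union_subset (subset_convexHull ℝ _)
      (Set.singleton_subset_iff.2 (h.mem_convexHull_of_le hn hle))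
  refine hadd.notMem ?_
  rw [← h.vertexSet_eq, ← hQ]
  exact hadd.self_mem_vertexSet

include h

theorem facet_ne_one (hn : 0 < n) (φ : Φ) : f φ w₀ ≠ 1 := by
  intro hw
  obtain ⟨g, hgw, hg⟩ := hadd.isSmoothFano.exists_dual_of_isFacetFunctional hn
    (hadd.isFacetFunctional (h.le_one φ) hw fun e he _ => h.sep φ e he) hadd.self_mem_vertexSet hw
  have hzero : g = 0 := h.sep φ g fun i hi =>
    hg _ (hadd.apply_mem_vertexSet i) hi fun hi' => hadd.notMem ⟨i, hi'⟩
  simp [hzero] at hgw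

theorem isFacetFunctional_convexCombination (hw : CrossesWall p f φ φ' i)
    (hsep : (f φ w₀ - 1) * (f φ' w₀ - 1) < 0) {s : ℝ} (hs₀ : 0 ≤ s) (hs₁ : s ≤ 1)
    (hs : (1 - s) * f φ w₀ + s * f φ' w₀ = 1) :
    IsFacetFunctional Q ((1 - s) • f φ + s • f φ') := by
  refine hadd.isFacetFunctional (fun j => ?_) hs fun g hg hgw => ?_
  · simp only [LinearMap.add_apply, LinearMap.smul_apply, smul_eq_mul]
    nlinarith [h.le_one φ j, h.le_one φ' j]
  have hg' : g = g (p i) • h.coord φ i := h.eq_smul_coord hw.1 fun j hji hj => hg j <| by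
    simp [hj, hw.2.2 j hji hj]
  have hcoord : h.coord φ i w₀ ≠ 0 := by
    intro hzero
    have hdiff := LinearMap.congr_fun (h.sub_eq_smul_coord hw) w₀
    simp only [LinearMap.sub_apply, LinearMap.smul_apply, hzero, smul_zero, sub_eq_zero] at hdiff
    exact (mul_self_nonneg _).not_gt (hdiff ▸ hsep)
  have hgi : g (p i) * h.coord φ i w₀ = 0 := hgw ▸ (LinearMap.congr_fun hg' w₀).symm
  rw [hg', (mul_eq_zero.1 hgi).resolve_right hcoord, zero_smul]

/-- The convex combination of the two functionals taking the value `1` at the new vertex cuts out a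
facet of the new polytope, so it is integral. -/
theorem exists_intCast_eq_of_separated (hn : 0 < n) (hw : CrossesWall p f φ φ' i)
    (hsep : (f φ w₀ - 1) * (f φ' w₀ - 1) < 0) :
    ∃ s : ℝ, 0 < s ∧ s < 1 ∧ (1 - s) * f φ w₀ + s * f φ' w₀ = 1 ∧
      ∃ m : ℤ, 1 - s + s * f φ' (p i) = m := by
  obtain ⟨s, hs₀, hs₁, hs⟩ := exists_convexCombination_eq_one hsep
  have hfacet := hadd.isFacetFunctional_convexCombination h hw hsep hs₀.le hs₁.le hs
  obtain ⟨m, hm⟩ :=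
    hadd.isSmoothFano.latticeIntegral_of_isFacetFunctional hn hfacet (p i) (h.lattice i)
  exact ⟨s, hs₀, hs₁, hs, m, by simpa [hw.1] using hm⟩

theorem one_lt_iff_of_apply_eq_zero (hn : 0 < n) (hw : CrossesWall p f φ φ' i)
    (hi : f φ' (p i) = 0) : 1 < f φ w₀ ↔ 1 < f φ' w₀ := by
  have hns : ¬ (f φ w₀ - 1) * (f φ' w₀ - 1) < 0 := by
    intro hsep
    obtain ⟨s, hs₀, hs₁, -, m, hm⟩ := hadd.exists_intCast_eq_of_separated h hn hw hsep
    rw [hi, mul_zero, add_zero] at hm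
    have hm₀ : 0 < m := by exact_mod_cast (by linarith : (0 : ℝ) < m)
    have hm₁ : m < 1 := by exact_mod_cast (by linarith : (m : ℝ) < 1)
    omega
  have hφ := hadd.facet_ne_one h hn φ
  have hφ' := hadd.facet_ne_one h hn φ'
  constructor <;> intro hlt <;> by_contra hle <;> refine hns ?_
  · exact mul_neg_of_pos_of_neg (sub_pos.2 hlt) (sub_neg.2 (lt_of_le_of_ne (not_lt.1 hle) hφ'))
  · exact mul_neg_of_neg_of_pos (sub_neg.2 (lt_of_le_of_ne (not_lt.1 hle) hφ)) (sub_pos.2 hlt)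

theorem add_eq_two_of_apply_eq_neg_one (hn : 0 < n) (hw : CrossesWall p f φ φ' i)
    (hi : f φ' (p i) = -1) (hsep : (f φ w₀ - 1) * (f φ' w₀ - 1) < 0) : f φ w₀ + f φ' w₀ = 2 := by
  obtain ⟨s, hs₀, hs₁, hs, m, hm⟩ := hadd.exists_intCast_eq_of_separated h hn hw hsep
  rw [hi] at hm
  have hm₀ : -1 < m := by exact_mod_cast (by linarith : (-1 : ℝ) < m)
  have hm₁ : m < 1 := by exact_mod_cast (by linarith : (m : ℝ) < 1)
  obtain rfl : m = 0 := by omega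
  push_cast at hm
  obtain rfl : s = 1 / 2 := by linarith
  linarith

end IsVertexAddition

/-! ### The combinatorial type -/

/-- Labels of the vertices `v_i`, `y_q`, `z`, `t`, `u_r`, `w_{i,j}`. -/
inductive VertexLabel (a b k : ℕ) (l : Fin k → ℕ) : Type
  | v (i : Fin a)
  | y (q : Fin b)
  | z
  | t
  | u (r : Fin b)
  | w (j : Fin k) (i : Fin (l j + 1))

/-- A choice of one label in each of the families `v`, `y`, `u` and `w_{·,j}`. -/
structure LabelChoice (a b k : ℕ) (l : Fin k → ℕ) : Type where
  i : Fin a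
  q : Fin b
  r : Fin b
  c : (j : Fin k) → Fin (l j + 1)

/-- The five kinds of facets, each named by the two families among `v`, `y`, `z`, `t`, `u` it
contains. -/
inductive FacetKind : Type
  | yu
  | vz
  | yt
  | zu
  | vt

section Labels

variable {a b k : ℕ} {l : Fin k → ℕ}

namespace VertexLabel

/-- The labels as a disjoint union, used to count them. -/
def equivSum :
    VertexLabel a b k l ≃ (Fin a ⊕ Fin b) ⊕ (Fin b ⊕ Bool) ⊕ Σ j : Fin k, Fin (l j + 1) where
  toFun
    | v i => .inl (.inl i)
    | y q => .inl (.inr q)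
    | z => .inr (.inl (.inr true))
    | t => .inr (.inl (.inr false))
    | u r => .inr (.inl (.inl r))
    | w j i => .inr (.inr ⟨j, i⟩)
  invFun
    | .inl (.inl i) => v i
    | .inl (.inr q) => y q
    | .inr (.inl (.inr true)) => z
    | .inr (.inl (.inr false)) => t
    | .inr (.inl (.inl r)) => u r
    | .inr (.inr ⟨j, i⟩) => w j i
  left_inv x := by cases x <;> rfl
  right_inv x := by rcases x with (x | x) | (x | (_ | _)) | ⟨x, y⟩ <;> rfl

noncomputable instance : Fintype (VertexLabel a b k l) := Fintype.ofEquiv _ equivSum.symm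

theorem card_eq : Fintype.card (VertexLabel a b k l) = a + 2 * b + 2 + (∑ j, l j) + k := by
  rw [Fintype.card_congr equivSum]
  simp only [Fintype.card_sum, Fintype.card_fin, Fintype.card_bool, Fintype.card_sigma,
    Finset.sum_add_distrib, Finset.sum_const, Finset.card_univ, smul_eq_mul]
  omega

end VertexLabel

instance : Finite (LabelChoice a b k l) :=
  Finite.of_injective (fun s => (s.i, s.q, s.r, s.c)) fun s s' h => by
    cases s
    cases s'
    simpa using h

theorem LabelChoice.nonempty (k : ℕ) (l : Fin k → ℕ) (ha : 0 < a) (hb : 0 < b) :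
    Nonempty (LabelChoice a b k l) :=
  ⟨⟨⟨0, ha⟩, ⟨0, hb⟩, ⟨0, hb⟩, fun _ => 0⟩⟩

instance : Finite FacetKind :=
  Finite.of_surjective (fun m : Fin 5 => match m with
    | 0 => FacetKind.yu
    | 1 => FacetKind.vz
    | 2 => FacetKind.yt
    | 3 => FacetKind.zu
    | 4 => FacetKind.vt) fun κ => by
    cases κ
    exacts [⟨0, rfl⟩, ⟨1, rfl⟩, ⟨2, rfl⟩, ⟨3, rfl⟩, ⟨4, rfl⟩]

instance : Nonempty FacetKind := ⟨.yu⟩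

namespace FacetKind

/-- The labels missing from the facet of kind `κ` determined by the choice `s`: those chosen by `s`
in the families not contained in the facet. -/
def Omits (κ : FacetKind) (s : LabelChoice a b k l) : VertexLabel a b k l → Prop
  | .v i => i = s.i ∧ κ ≠ vz ∧ κ ≠ vt
  | .y q => q = s.q ∧ κ ≠ yu ∧ κ ≠ yt
  | .z => κ ≠ vz ∧ κ ≠ zu
  | .t => κ ≠ yt ∧ κ ≠ vt
  | .u r => r = s.r ∧ κ ≠ yu ∧ κ ≠ zu
  | .w j i => i = s.c j

theorem exists_not_omits (ha : 0 < a) (hb : 0 < b) (hl : ∀ j, 1 ≤ l j)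
    (x : VertexLabel a b k l) : ∃ (κ : FacetKind) (s : LabelChoice a b k l), ¬ κ.Omits s x := by
  obtain ⟨s⟩ := LabelChoice.nonempty k l ha hb
  cases x with
  | v i => exact ⟨vz, s, by simp [Omits]⟩
  | y q => exact ⟨yu, s, by simp [Omits]⟩
  | z => exact ⟨vz, s, by simp [Omits]⟩
  | t => exact ⟨yt, s, by simp [Omits]⟩
  | u r => exact ⟨yu, s, by simp [Omits]⟩
  | w j i =>
    have : Nontrivial (Fin (l j + 1)) := Fin.nontrivial_iff_two_le.2 (by have := hl j; omega)
    obtain ⟨i', hne⟩ := exists_ne i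
    exact ⟨yu, { s with c := Function.update s.c j i' }, by simpa [Omits] using hne.symm⟩

theorem exists_wall (κ : FacetKind) (s : LabelChoice a b k l) (x : VertexLabel a b k l)
    (hx : ¬ κ.Omits s x) : ∃ (κ' : FacetKind) (s' : LabelChoice a b k l), κ'.Omits s' x ∧
      ∀ x', x' ≠ x → ¬ κ.Omits s x' → ¬ κ'.Omits s' x' := by
  cases x with
  | w j i =>
    refine ⟨κ, { s with c := Function.update s.c j i }, by simp [Omits], fun x' hne hx' => ?_⟩
    cases x' with
    | w j' i' =>
      rcases eq_or_ne j' j with rfl | hj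
      · simpa [Omits] using hne
      · simpa [Omits, Function.update_of_ne hj] using hx'
    | _ => exact hx'
  | v i =>
    refine ⟨match κ with | yu => yu | vz | zu => zu | yt | vt => yt, { s with i := i }, ?_,
      fun x' => ?_⟩
    · cases κ <;> simp [Omits]
    · cases κ <;> cases x' <;> simp +contextual [Omits]
  | y q =>
    refine ⟨match κ with | vz => vz | yu | zu => zu | yt | vt => vt, { s with q := q }, ?_,
      fun x' => ?_⟩
    · cases κ <;> simp [Omits]
    · cases κ <;> cases x' <;> simp +contextual [Omits]
  | u r =>
    refine ⟨match κ with | vt => vt | yu | yt => yt | vz | zu => vz, { s with r := r }, ?_,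
      fun x' => ?_⟩
    · cases κ <;> simp [Omits]
    · cases κ <;> cases x' <;> simp +contextual [Omits]
  | z =>
    refine ⟨match κ with | zu => yu | _ => vt, s, ?_, fun x' => ?_⟩
    · cases κ <;> simp [Omits] at hx ⊢
    · cases κ <;> cases x' <;> simp [Omits] at hx ⊢
  | t =>
    refine ⟨match κ with | yt => yu | _ => vz, s, ?_, fun x' => ?_⟩
    · cases κ <;> simp [Omits] at hx ⊢
    · cases κ <;> cases x' <;> simp [Omits] at hx ⊢

/-- An independent set of the pentagon with edges `VY`, `YZ`, `ZT`, `TU`, `UV` has at most two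
vertices. -/
theorem exists_of_pentagon {V Y Z T U : Prop} (hVY : ¬ (V ∧ Y)) (hYZ : ¬ (Y ∧ Z))
    (hZT : ¬ (Z ∧ T)) (hTU : ¬ (T ∧ U)) (hUV : ¬ (U ∧ V)) :
    ∃ κ : FacetKind, (V → κ = vz ∨ κ = vt) ∧ (Y → κ = yu ∨ κ = yt) ∧ (Z → κ = vz ∨ κ = zu) ∧
      (T → κ = yt ∨ κ = vt) ∧ (U → κ = yu ∨ κ = zu) := by
  by_cases hV : V
  · by_cases hZ : Z
    · exact ⟨vz, by simp_all⟩
    · exact ⟨vt, by simp_all⟩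
  · by_cases hY : Y
    · by_cases hT : T
      · exact ⟨yt, by simp_all⟩
      · exact ⟨yu, by simp_all⟩
    · by_cases hT : T
      · exact ⟨vt, by simp_all⟩
      · exact ⟨zu, by simp_all⟩

end FacetKind

/-- The minimal sets of labels not contained in a facet. -/
inductive IsCircuit : Set (VertexLabel a b k l) → Prop
  | vy : IsCircuit (Set.range .v ∪ Set.range .y)
  | yz : IsCircuit (Set.range .y ∪ {.z})
  | zt : IsCircuit {.z, .t}
  | tu : IsCircuit (insert .t (Set.range .u))
  | uv : IsCircuit (Set.range .u ∪ Set.range .v)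
  | w (j : Fin k) : IsCircuit (Set.range (.w j))

theorem exists_apply_mem_imp_range_subset {ι β : Type*} [Nonempty ι] (g : ι → β) (A : Set β) :
    ∃ i, g i ∈ A → Set.range g ⊆ A := by
  by_cases h : Set.range g ⊆ A
  · exact ⟨Classical.arbitrary ι, fun _ => h⟩
  · obtain ⟨_, ⟨i, rfl⟩, hi⟩ := Set.not_subset.1 h
    exact ⟨i, fun hi' => absurd hi' hi⟩

namespace IsCircuit

variable {C C' A : Set (VertexLabel a b k l)}

theorem exists_omits (hC : IsCircuit C) (κ : FacetKind) (s : LabelChoice a b k l) :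
    ∃ x ∈ C, κ.Omits s x := by
  cases hC with
  | w j => exact ⟨.w j (s.c j), ⟨_, rfl⟩, rfl⟩
  | _ => cases κ <;> simp [FacetKind.Omits, or_and_right, exists_or]

theorem exists_facet_of_forall_not_subset (ha : 0 < a) (hb : 0 < b)
    (hA : ∀ C, IsCircuit C → ¬ C ⊆ A) :
    ∃ (κ : FacetKind) (s : LabelChoice a b k l), ∀ x ∈ A, ¬ κ.Omits s x := by
  have : Nonempty (Fin a) := ⟨⟨0, ha⟩⟩
  have : Nonempty (Fin b) := ⟨⟨0, hb⟩⟩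
  obtain ⟨i, hi⟩ := exists_apply_mem_imp_range_subset VertexLabel.v A
  obtain ⟨q, hq⟩ := exists_apply_mem_imp_range_subset VertexLabel.y A
  obtain ⟨r, hr⟩ := exists_apply_mem_imp_range_subset VertexLabel.u A
  choose c hc using fun j => exists_apply_mem_imp_range_subset (VertexLabel.w j) A
  obtain ⟨κ, hV, hY, hZ, hT, hU⟩ := FacetKind.exists_of_pentagon
    (V := .v i ∈ A) (Y := .y q ∈ A) (Z := .z ∈ A) (T := .t ∈ A) (U := .u r ∈ A)
    (fun h => hA _ vy (Set.union_subset (hi h.1) (hq h.2)))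
    (fun h => hA _ yz (Set.union_subset (hq h.1) (Set.singleton_subset_iff.2 h.2)))
    (fun h => hA _ zt (Set.pair_subset h.1 h.2))
    (fun h => hA _ tu (Set.insert_subset h.1 (hr h.2)))
    (fun h => hA _ uv (Set.union_subset (hr h.1) (hi h.2)))
  refine ⟨κ, ⟨i, q, r, c⟩, fun x hx ho => ?_⟩
  cases x with
  | v i' =>
    obtain ⟨rfl, ho⟩ := ho
    exact (hV hx).elim ho.1 ho.2
  | y q' =>
    obtain ⟨rfl, ho⟩ := ho
    exact (hY hx).elim ho.1 ho.2
  | z => exact (hZ hx).elim ho.1 ho.2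
  | t => exact (hT hx).elim ho.1 ho.2
  | u r' =>
    obtain ⟨rfl, ho⟩ := ho
    exact (hU hx).elim ho.1 ho.2
  | w j i' =>
    obtain rfl : i' = c j := ho
    exact hA _ (w j) (hc j hx)

theorem eq_of_subset (ha : 0 < a) (hb : 0 < b) (hC : IsCircuit C) (hC' : IsCircuit C')
    (h : C ⊆ C') : C = C' := by
  have hv := @h (.v ⟨0, ha⟩)
  have hy := @h (.y ⟨0, hb⟩)
  have hz := @h .z
  have ht := @h .t
  have hu := @h (.u ⟨0, hb⟩)
  cases hC with
  | w j =>
    have hw := h ⟨0, rfl⟩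
    cases hC' with
    | w j' =>
      obtain ⟨i, hi⟩ := hw
      cases hi
      rfl
    | _ => simp at hw
  | _ => cases hC' <;> first | rfl | simp at hv hy hz ht hu

theorem ne_univ (ha : 0 < a) (hb : 0 < b) (hC : IsCircuit C) : C ≠ Set.univ := by
  rintro rfl
  have hv : (.v ⟨0, ha⟩ : VertexLabel a b k l) ∈ ({.z, .t} : Set (VertexLabel a b k l)) :=
    zt.eq_of_subset ha hb hC (Set.subset_univ _) ▸ Set.mem_univ _
  simp at hv

theorem iff_minimal (ha : 0 < a) (hb : 0 < b) :
    IsCircuit A ↔ (¬ ∃ (κ : FacetKind) (s : LabelChoice a b k l), ∀ x ∈ A, ¬ κ.Omits s x) ∧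
      ∀ x ∈ A, ∃ (κ : FacetKind) (s : LabelChoice a b k l), ∀ y ∈ A \ {x}, ¬ κ.Omits s y := by
  constructor
  · refine fun hA => ⟨fun ⟨κ, s, h⟩ => ?_, fun x hx => ?_⟩
    · obtain ⟨x, hx, hxo⟩ := hA.exists_omits κ s
      exact h x hx hxo
    · refine exists_facet_of_forall_not_subset ha hb fun C hC hCA => ?_
      obtain rfl := hC.eq_of_subset ha hb hA (hCA.trans Set.sdiff_subset)
      exact (hCA hx).2 rfl
  · rintro ⟨hA, hmin⟩
    obtain ⟨C, hC, hCA⟩ : ∃ C, IsCircuit C ∧ C ⊆ A := by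
      by_contra! h
      exact hA (exists_facet_of_forall_not_subset ha hb h)
    suffices A ⊆ C from Set.Subset.antisymm hCA this ▸ hC
    intro x hx
    by_contra hxC
    obtain ⟨κ, s, h⟩ := hmin x hx
    obtain ⟨y, hy, hyo⟩ := hC.exists_omits κ s
    exact h y ⟨hCA hy, fun hyx => hxC (hyx ▸ hy)⟩ hyo

end IsCircuit

end Labels

/-! ### Solutions of the relations -/

section Relations

variable {a b k : ℕ} {l : Fin k → ℕ} {M : Type*} [AddCommGroup M]

/-- The label named by an element of `{y_1, …, y_b, u_1, …, u_b}`. -/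
def VertexLabel.ofName : Fin b ⊕ Fin b → VertexLabel a b k l := Sum.elim .y .u

/-- The elements `ψ` of an abelian group, attached to the labels, satisfy the linear relations
between the vertices. The two relations missing from the list follow from the others. -/
structure SatisfiesRelations (α : (j : Fin k) → Fin (l j) → Fin b ⊕ Fin b)
    (ψ : VertexLabel a b k l → M) : Prop where
  vy : ∑ i, ψ (.v i) + ∑ q, ψ (.y q) = (a + b - 1 : ℤ) • ψ .t
  yz : ∑ q, ψ (.y q) + ψ .z = ∑ r, ψ (.u r)
  zt : ψ .z + ψ .t = 0
  w : ∀ j, ∑ i, ψ (.w j i) = ∑ m, ψ (.ofName (α j m))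

/-- The modification of `ψ` by the given amounts at the labels chosen by `s`, and at the chosen
label of each family `w_{·,j}` by the amount making its relation hold. -/
def adjust (α : (j : Fin k) → Fin (l j) → Fin b ⊕ Fin b) (ψ : VertexLabel a b k l → M)
    (s : LabelChoice a b k l) (dv dy dz dt du : M) : VertexLabel a b k l → M
  | .v i => ψ (.v i) + (Pi.single s.i dv : Fin a → M) i
  | .y q => ψ (.y q) + (Pi.single s.q dy : Fin b → M) q
  | .z => ψ .z + dz
  | .t => ψ .t + dt
  | .u r => ψ (.u r) + (Pi.single s.r du : Fin b → M) r
  | .w j i => ψ (.w j i) + (Pi.single (s.c j)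
      (∑ m, Sum.elim (fun q => ψ (.y q) + (Pi.single s.q dy : Fin b → M) q)
        (fun r => ψ (.u r) + (Pi.single s.r du : Fin b → M) r) (α j m) - ∑ i, ψ (.w j i)) :
      Fin (l j + 1) → M) i

variable {α : (j : Fin k) → Fin (l j) → Fin b ⊕ Fin b}

theorem adjust_ofName (ψ : VertexLabel a b k l → M) (s : LabelChoice a b k l)
    (dv dy dz dt du : M) (e : Fin b ⊕ Fin b) : adjust α ψ s dv dy dz dt du (.ofName e) =
      Sum.elim (fun q => ψ (.y q) + (Pi.single s.q dy : Fin b → M) q)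
        (fun r => ψ (.u r) + (Pi.single s.r du : Fin b → M) r) e := by
  cases e <;> rfl

theorem satisfiesRelations_adjust {ψ : VertexLabel a b k l → M} {s : LabelChoice a b k l}
    {dv dy dz dt du : M}
    (hvy : ∑ i, ψ (.v i) + dv + (∑ q, ψ (.y q) + dy) = (a + b - 1 : ℤ) • (ψ .t + dt))
    (hyz : ∑ q, ψ (.y q) + dy + (ψ .z + dz) = ∑ r, ψ (.u r) + du)
    (hzt : ψ .z + dz + (ψ .t + dt) = 0) :
    SatisfiesRelations α (adjust α ψ s dv dy dz dt du) where
  vy := by simpa only [adjust, Finset.sum_add_distrib, Fintype.sum_pi_single'] using hvy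
  yz := by simpa only [adjust, Finset.sum_add_distrib, Fintype.sum_pi_single'] using hyz
  zt := hzt
  w j := by
    simp only [adjust_ofName]
    simp [adjust, Finset.sum_add_distrib]

theorem adjust_eq_of_not_omits {ψ : VertexLabel a b k l → M} {κ : FacetKind}
    {s : LabelChoice a b k l} {dv dy dz dt du : M}
    (hv : κ = .vz ∨ κ = .vt → dv = 0) (hy : κ = .yu ∨ κ = .yt → dy = 0)
    (hz : κ = .vz ∨ κ = .zu → dz = 0) (ht : κ = .yt ∨ κ = .vt → dt = 0)
    (hu : κ = .yu ∨ κ = .zu → du = 0) {x : VertexLabel a b k l} (hx : ¬ κ.Omits s x) :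
    adjust α ψ s dv dy dz dt du x = ψ x := by
  cases x <;> simp only [adjust, FacetKind.Omits, ne_eq, not_and_or, not_not, Pi.single_apply,
    add_eq_left, ite_eq_right_iff] at hx ⊢ <;> tauto

namespace FacetKind

theorem exists_solution (κ : FacetKind) (m : ℤ) (V Y Z T U : M) :
    ∃ V' Y' Z' T' U' : M, V' + Y' = m • T' ∧ Y' + Z' = U' ∧ Z' + T' = 0 ∧
      (κ = vz ∨ κ = vt → V' = V) ∧ (κ = yu ∨ κ = yt → Y' = Y) ∧ (κ = vz ∨ κ = zu → Z' = Z) ∧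
      (κ = yt ∨ κ = vt → T' = T) ∧ (κ = yu ∨ κ = zu → U' = U) := by
  cases κ with
  | yu => exact ⟨m • (Y - U) - Y, Y, U - Y, Y - U, U, by module, by module, by module, by simp⟩
  | vz => exact ⟨V, -m • Z - V, Z, -Z, -m • Z - V + Z, by module, by module, by module, by simp⟩
  | yt => exact ⟨m • T - Y, Y, -T, T, Y - T, by module, by module, by module, by simp⟩
  | zu => exact ⟨-m • Z - (U - Z), U - Z, Z, -Z, U, by module, by module, by module, by simp⟩
  | vt => exact ⟨V, m • T - V, -T, T, m • T - V - T, by module, by module, by module, by simp⟩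

theorem eq_zero_of_solution (κ : FacetKind) {m : ℤ} {V Y Z T U : M} (hvy : V + Y = m • T)
    (hyz : Y + Z = U) (hzt : Z + T = 0) (hV : κ = vz ∨ κ = vt → V = 0)
    (hY : κ = yu ∨ κ = yt → Y = 0) (hZ : κ = vz ∨ κ = zu → Z = 0)
    (hT : κ = yt ∨ κ = vt → T = 0) (hU : κ = yu ∨ κ = zu → U = 0) :
    V = 0 ∧ Y = 0 ∧ Z = 0 ∧ T = 0 ∧ U = 0 := by
  cases κ <;> simp_all

end FacetKind

theorem exists_satisfiesRelations_eq (α : (j : Fin k) → Fin (l j) → Fin b ⊕ Fin b) (κ : FacetKind)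
    (s : LabelChoice a b k l) (ψ : VertexLabel a b k l → M) :
    ∃ ψ' : VertexLabel a b k l → M,
      SatisfiesRelations α ψ' ∧ ∀ x, ¬ κ.Omits s x → ψ' x = ψ x := by
  obtain ⟨V, Y, Z, T, U, hvy, hyz, hzt, hV, hY, hZ, hT, hU⟩ := κ.exists_solution
    (a + b - 1) (∑ i, ψ (.v i)) (∑ q, ψ (.y q)) (ψ .z) (ψ .t) (∑ r, ψ (.u r))
  refine ⟨adjust α ψ s (V - ∑ i, ψ (.v i)) (Y - ∑ q, ψ (.y q)) (Z - ψ .z) (T - ψ .t)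
    (U - ∑ r, ψ (.u r)), satisfiesRelations_adjust ?_ ?_ ?_, fun x => adjust_eq_of_not_omits
    (sub_eq_zero.2 <| hV ·) (sub_eq_zero.2 <| hY ·) (sub_eq_zero.2 <| hZ ·)
    (sub_eq_zero.2 <| hT ·) (sub_eq_zero.2 <| hU ·)⟩
  · simpa only [add_sub_cancel] using hvy
  · simpa only [add_sub_cancel] using hyz
  · simpa only [add_sub_cancel] using hzt

namespace SatisfiesRelations

theorem map {N : Type*} [AddCommGroup N] {ψ : VertexLabel a b k l → M}
    (h : SatisfiesRelations α ψ) (g : M →+ N) : SatisfiesRelations α fun x => g (ψ x) where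
  vy := by simpa only [map_add, map_sum, map_zsmul] using congrArg g h.vy
  yz := by simpa only [map_add, map_sum] using congrArg g h.yz
  zt := by simpa only [map_add, map_zero] using congrArg g h.zt
  w j := by simpa only [map_sum] using congrArg g (h.w j)

theorem sub {ψ ψ' : VertexLabel a b k l → M} (h : SatisfiesRelations α ψ)
    (h' : SatisfiesRelations α ψ') : SatisfiesRelations α (ψ - ψ') where
  vy := by
    simp only [Pi.sub_apply, Finset.sum_sub_distrib, smul_sub, ← h.vy, ← h'.vy]
    abel
  yz := by
    simp only [Pi.sub_apply, Finset.sum_sub_distrib, ← h.yz, ← h'.yz]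
    abel
  zt := by rw [Pi.sub_apply, Pi.sub_apply, sub_add_sub_comm, h.zt, h'.zt, sub_zero]
  w j := by simp only [Pi.sub_apply, Finset.sum_sub_distrib, h.w, h'.w]

theorem eq_zero {ψ : VertexLabel a b k l → M} (h : SatisfiesRelations α ψ) (κ : FacetKind)
    (s : LabelChoice a b k l) (hψ : ∀ x, ¬ κ.Omits s x → ψ x = 0) : ψ = 0 := by
  have hv : ∀ i ≠ s.i, ψ (.v i) = 0 := fun i hi => hψ _ fun ho => hi ho.1
  have hy : ∀ q ≠ s.q, ψ (.y q) = 0 := fun q hq => hψ _ fun ho => hq ho.1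
  have hu : ∀ r ≠ s.r, ψ (.u r) = 0 := fun r hr => hψ _ fun ho => hr ho.1
  have hw : ∀ j, ∀ i ≠ s.c j, ψ (.w j i) = 0 := fun j i hi => hψ _ hi
  have hvy := h.vy
  have hyz := h.yz
  rw [Fintype.sum_eq_single _ hv, Fintype.sum_eq_single _ hy] at hvy
  rw [Fintype.sum_eq_single _ hy, Fintype.sum_eq_single _ hu] at hyz
  obtain ⟨hV, hY, hZ, hT, hU⟩ := κ.eq_zero_of_solution hvy hyz h.zt
    (fun hκ => hψ _ fun ho => hκ.elim ho.2.1 ho.2.2)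
    (fun hκ => hψ _ fun ho => hκ.elim ho.2.1 ho.2.2) (fun hκ => hψ _ fun ho => hκ.elim ho.1 ho.2)
    (fun hκ => hψ _ fun ho => hκ.elim ho.1 ho.2) (fun hκ => hψ _ fun ho => hκ.elim ho.2.1 ho.2.2)
  replace hy : ∀ q, ψ (.y q) = 0 := fun q => (eq_or_ne q s.q).elim (· ▸ hY) (hy q)
  replace hu : ∀ r, ψ (.u r) = 0 := fun r => (eq_or_ne r s.r).elim (· ▸ hU) (hu r)
  have hname : ∀ e, ψ (.ofName e) = 0 := Sum.rec hy hu
  funext x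
  cases x with
  | v i => exact (eq_or_ne i s.i).elim (· ▸ hV) (hv i)
  | y q => exact hy q
  | z => exact hZ
  | t => exact hT
  | u r => exact hu r
  | w j i =>
    refine (eq_or_ne i (s.c j)).elim (fun hi => ?_) (hw j i)
    rw [hi, Pi.zero_apply, ← Fintype.sum_eq_single _ (hw j), h.w,
      Finset.sum_eq_zero fun m _ => hname _]

theorem ext_of_not_omits {ψ ψ' : VertexLabel a b k l → M} (h : SatisfiesRelations α ψ)
    (h' : SatisfiesRelations α ψ') (κ : FacetKind) (s : LabelChoice a b k l)
    (heq : ∀ x, ¬ κ.Omits s x → ψ x = ψ' x) : ψ = ψ' :=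
  sub_eq_zero.1 <| (h.sub h').eq_zero κ s fun x hx => sub_eq_zero.2 (heq x hx)

end SatisfiesRelations

end Relations

/-! ### Facet values and realizations -/

section FacetValues

variable {a b k : ℕ} {l : Fin k → ℕ} {α : (j : Fin k) → Fin (l j) → Fin b ⊕ Fin b}

/-- The solution of the relations which is `T` at `t` and `Y` at the chosen `y`, and which is one at
all other labels of the families `v`, `y`, `u`, `w` not chosen by `s`. -/
noncomputable def unitSolution (α : (j : Fin k) → Fin (l j) → Fin b ⊕ Fin b) (T Y : ℝ)
    (s : LabelChoice a b k l) : VertexLabel a b k l → ℝ :=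
  adjust α 1 s ((a + b - 1) * (T - 1) - Y) (Y - 1) (-T - 1) (T - 1) (Y - T - 1)

theorem satisfiesRelations_unitSolution (T Y : ℝ) (s : LabelChoice a b k l) :
    SatisfiesRelations α (unitSolution α T Y s) := by
  apply satisfiesRelations_adjust
  · simp only [Pi.one_apply, Finset.sum_const, Finset.card_univ, Fintype.card_fin, nsmul_eq_mul,
      mul_one, add_sub_cancel, zsmul_eq_mul, Int.cast_sub, Int.cast_add, Int.cast_natCast,
      Int.cast_one]
    ring
  · simp only [Pi.one_apply, Finset.sum_const, Finset.card_univ, Fintype.card_fin, nsmul_eq_mul,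
      mul_one, add_sub_cancel]
    ring
  · simp

section Values

variable (T Y : ℝ) (s : LabelChoice a b k l)

theorem unitSolution_v (i : Fin a) : unitSolution α T Y s (.v i) =
    1 + (Pi.single s.i ((a + b - 1) * (T - 1) - Y) : Fin a → ℝ) i := rfl

theorem unitSolution_y (q : Fin b) : unitSolution α T Y s (.y q) =
    1 + (Pi.single s.q (Y - 1) : Fin b → ℝ) q := rfl

theorem unitSolution_u (r : Fin b) : unitSolution α T Y s (.u r) =
    1 + (Pi.single s.r (Y - T - 1) : Fin b → ℝ) r := rfl

theorem unitSolution_z : unitSolution α T Y s .z = -T := add_sub_cancel 1 _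

theorem unitSolution_t : unitSolution α T Y s .t = T := add_sub_cancel 1 _

theorem unitSolution_w (j : Fin k) (i : Fin (l j + 1)) : unitSolution α T Y s (.w j i) =
    1 + (Pi.single (s.c j) (∑ m, (unitSolution α T Y s (.ofName (α j m)) - 1) - 1) :
      Fin (l j + 1) → ℝ) i := by
  have hsum : ∑ m, (unitSolution α T Y s (.ofName (α j m)) - 1) - 1 =
      ∑ m, unitSolution α T Y s (.ofName (α j m)) - ∑ _i : Fin (l j + 1), (1 : ℝ) := by
    simp [sub_sub]
  rw [hsum]
  simp only [unitSolution, adjust_ofName]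
  rfl

end Values

section Bounds

variable {ι : Type*} [DecidableEq ι] {i j : ι} {x : ℝ}

theorem one_add_single_le_one (hx : x ≤ 0) : 1 + (Pi.single i x : ι → ℝ) j ≤ 1 :=
  add_le_of_nonpos_right (Pi.single_nonpos.2 hx j)

theorem one_add_single_eq_one_iff : 1 + (Pi.single i x : ι → ℝ) j = 1 ↔ (j = i → x = 0) := by
  simp [Pi.single_apply]

variable {T Y : ℝ} {s : LabelChoice a b k l} (hY : Y ≤ 1) (hU : Y - T ≤ 1)

include hY hU

theorem unitSolution_ofName_le_one (e : Fin b ⊕ Fin b) :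
    unitSolution α T Y s (.ofName e) ≤ 1 := by
  rcases e with q | r
  · exact one_add_single_le_one (sub_nonpos.2 hY)
  · exact one_add_single_le_one (sub_nonpos.2 hU)

theorem sum_unitSolution_ofName_sub_one_nonpos (j : Fin k) :
    ∑ m, (unitSolution α T Y s (.ofName (α j m)) - 1) ≤ 0 :=
  Finset.sum_nonpos fun _ _ => sub_nonpos.2 (unitSolution_ofName_le_one hY hU _)

theorem unitSolution_w_le_one (j : Fin k) (i : Fin (l j + 1)) :
    unitSolution α T Y s (.w j i) ≤ 1 := by
  have := sum_unitSolution_ofName_sub_one_nonpos (α := α) (s := s) hY hU j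
  rw [unitSolution_w]
  exact one_add_single_le_one (by linarith)

theorem unitSolution_w_eq_one_iff (j : Fin k) (i : Fin (l j + 1)) :
    unitSolution α T Y s (.w j i) = 1 ↔ i ≠ s.c j := by
  have := sum_unitSolution_ofName_sub_one_nonpos (α := α) (s := s) hY hU j
  rw [unitSolution_w, one_add_single_eq_one_iff, imp_congr_right fun _ => iff_false_intro ?_]
  linarith

end Bounds

namespace FacetKind

/-- The value at `t` of the functionals of the facets of kind `κ`. -/
def valueT : FacetKind → ℝ
  | yu => 0
  | vz => -1
  | yt => 1
  | zu => -1
  | vt => 1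

/-- The value at the chosen `y` of the functionals of the facets of kind `κ`. -/
def valueY (a b : ℕ) : FacetKind → ℝ
  | yu => 1
  | vz => -2 * (a + b - 1)
  | yt => 1
  | zu => 0
  | vt => 0

theorem valueT_eq_neg_one_iff (κ : FacetKind) : κ.valueT = -1 ↔ κ = vz ∨ κ = zu := by
  cases κ <;> simp [valueT] <;> norm_num

theorem valueT_eq_one_iff (κ : FacetKind) : κ.valueT = 1 ↔ κ = yt ∨ κ = vt := by
  cases κ <;> simp [valueT] <;> norm_num

section

variable (h : (1 : ℝ) < a + b) (κ : FacetKind)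

include h

theorem valueV_nonpos : (a + b - 1) * (κ.valueT - 1) - κ.valueY a b ≤ 0 := by
  cases κ <;> simp only [valueT, valueY] <;> linarith

theorem valueV_eq_zero_iff :
    (a + b - 1) * (κ.valueT - 1) - κ.valueY a b = 0 ↔ κ = vz ∨ κ = vt := by
  cases κ <;> simp only [valueT, valueY, reduceCtorEq, or_self, or_true, true_or, iff_true,
    iff_false] <;> first | ring1 | exact ne_of_lt (by linarith)

theorem valueY_le_one : κ.valueY a b ≤ 1 := by
  cases κ <;> simp only [valueY] <;> linarith

theorem valueY_eq_one_iff : κ.valueY a b = 1 ↔ κ = yu ∨ κ = yt := by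
  cases κ <;> simp only [valueY, reduceCtorEq, or_self, or_true, true_or, iff_false] <;>
    exact ne_of_lt (by linarith)

theorem valueU_le_one : κ.valueY a b - κ.valueT ≤ 1 := by
  cases κ <;> simp only [valueT, valueY] <;> linarith

theorem valueU_eq_one_iff : κ.valueY a b - κ.valueT = 1 ↔ κ = yu ∨ κ = zu := by
  cases κ <;> simp only [valueT, valueY, reduceCtorEq, or_self, or_true, true_or, iff_true,
    iff_false] <;> first | ring1 | exact ne_of_lt (by linarith)

end

end FacetKind

/-- The values at the vertices of the functional of the facet of kind `κ` determined by `s`. -/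
noncomputable def facetValue (α : (j : Fin k) → Fin (l j) → Fin b ⊕ Fin b) (κ : FacetKind)
    (s : LabelChoice a b k l) : VertexLabel a b k l → ℝ :=
  unitSolution α κ.valueT (κ.valueY a b) s

theorem LabelChoice.one_lt_add (s : LabelChoice a b k l) : (1 : ℝ) < a + b :=
  mod_cast Nat.add_lt_add_of_le_of_lt s.i.pos s.q.pos

theorem facetValue_le_one (κ : FacetKind) (s : LabelChoice a b k l) (x : VertexLabel a b k l) :
    facetValue α κ s x ≤ 1 := by
  have h := s.one_lt_add
  cases x with
  | v i => exact one_add_single_le_one (κ.valueV_nonpos h)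
  | y q => exact one_add_single_le_one (sub_nonpos.2 (κ.valueY_le_one h))
  | u r => exact one_add_single_le_one (sub_nonpos.2 (κ.valueU_le_one h))
  | z =>
    rw [facetValue, unitSolution_z]
    cases κ <;> norm_num [FacetKind.valueT]
  | t =>
    rw [facetValue, unitSolution_t]
    cases κ <;> norm_num [FacetKind.valueT]
  | w j i => exact unitSolution_w_le_one (κ.valueY_le_one h) (κ.valueU_le_one h) j i

theorem facetValue_eq_one_iff (κ : FacetKind) (s : LabelChoice a b k l)
    (x : VertexLabel a b k l) : facetValue α κ s x = 1 ↔ ¬ κ.Omits s x := by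
  have h := s.one_lt_add
  cases x with
  | v i =>
    rw [facetValue, unitSolution_v, one_add_single_eq_one_iff, κ.valueV_eq_zero_iff h]
    simp only [FacetKind.Omits]
    tauto
  | y q =>
    rw [facetValue, unitSolution_y, one_add_single_eq_one_iff, sub_eq_zero, κ.valueY_eq_one_iff h]
    simp only [FacetKind.Omits]
    tauto
  | u r =>
    rw [facetValue, unitSolution_u, one_add_single_eq_one_iff, sub_eq_zero, κ.valueU_eq_one_iff h]
    simp only [FacetKind.Omits]
    tauto
  | z =>
    rw [facetValue, unitSolution_z, neg_eq_iff_eq_neg, FacetKind.valueT_eq_neg_one_iff]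
    simp only [FacetKind.Omits]
    tauto
  | t =>
    rw [facetValue, unitSolution_t, FacetKind.valueT_eq_one_iff]
    simp only [FacetKind.Omits]
    tauto
  | w j i => exact unitSolution_w_eq_one_iff (κ.valueY_le_one h) (κ.valueU_le_one h) j i

end FacetValues

section Realizations

variable {n a b k : ℕ} {l : Fin k → ℕ} {α : (j : Fin k) → Fin (l j) → Fin b ⊕ Fin b}
  {p : VertexLabel a b k l → Fin n → ℝ}

/-- A configuration of lattice points which generates the lattice and whose linear relations are
exactly the consequences of the prescribed ones. -/
structure IsRealization (α : (j : Fin k) → Fin (l j) → Fin b ⊕ Fin b)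
    (p : VertexLabel a b k l → Fin n → ℝ) : Prop where
  lattice : ∀ x, IsLatticePoint (p x)
  rel : SatisfiesRelations α p
  ext : ∀ ψ : VertexLabel a b k l → ℝ, SatisfiesRelations α ψ →
    ∃ f : (Fin n → ℝ) →ₗ[ℝ] ℝ, ∀ x, f (p x) = ψ x
  sep : ∀ f : (Fin n → ℝ) →ₗ[ℝ] ℝ, (∀ x, f (p x) = 0) → f = 0
  int : ∀ f : (Fin n → ℝ) →ₗ[ℝ] ℝ, (∀ x, ∃ m : ℤ, f (p x) = m) → LatticeIntegral f

theorem SatisfiesRelations.comp_linearMap (h : SatisfiesRelations α p)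
    (f : (Fin n → ℝ) →ₗ[ℝ] ℝ) : SatisfiesRelations α fun x => f (p x) :=
  h.map f.toAddMonoidHom

theorem SatisfiesRelations.intCast {ψ : VertexLabel a b k l → ℤ} (h : SatisfiesRelations α ψ) :
    SatisfiesRelations α fun x => (ψ x : ℝ) :=
  h.map (Int.castAddHom ℝ)

theorem SatisfiesRelations.isRealization (hrel : SatisfiesRelations α p)
    (hlat : ∀ x, IsLatticePoint (p x)) {κ : FacetKind} {s : LabelChoice a b k l}
    (ε : {x // ¬ κ.Omits s x} ≃ Fin n) (hp : ∀ x : {x // ¬ κ.Omits s x}, p x = Pi.single (ε x) 1) :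
    IsRealization α p where
  lattice := hlat
  rel := hrel
  ext ψ hψ := by
    refine ⟨(Pi.basisFun ℝ (Fin n)).constr ℝ fun i => ψ (ε.symm i), fun x =>
      congrFun ((hrel.comp_linearMap _).ext_of_not_omits hψ κ s fun x hx => ?_) x⟩
    rw [hp ⟨x, hx⟩, ← Pi.basisFun_apply, Module.Basis.constr_basis, ε.symm_apply_apply]
  sep f hf := (Pi.basisFun ℝ (Fin n)).ext fun i => by
    rw [Pi.basisFun_apply, ← ε.apply_symm_apply i, ← hp, hf, LinearMap.zero_apply]
  int f hf x hx := by
    choose m hm using fun i => hf (ε.symm i)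
    choose c hc using hx
    refine ⟨∑ i, c i * m i, ?_⟩
    push_cast
    rw [← (Pi.basisFun ℝ (Fin n)).sum_repr x, map_sum]
    refine Finset.sum_congr rfl fun i _ => ?_
    rw [map_smul, Pi.basisFun_repr, Pi.basisFun_apply, hc, ← hm, hp, ε.apply_symm_apply,
      smul_eq_mul]

open Classical in
theorem card_omits_yu (s : LabelChoice a b k l) :
    Fintype.card {x // FacetKind.yu.Omits s x} = k + 3 := by
  have hfilter : Finset.univ.filter (FacetKind.yu.Omits s) = {.v s.i, .z, .t} ∪
      Finset.univ.image fun j => VertexLabel.w j (s.c j) := by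
    ext x
    cases x <;> simp [FacetKind.Omits, eq_comm]
  rw [Fintype.card_subtype, hfilter, Finset.card_union_of_disjoint,
    Finset.card_image_of_injective _ fun j j' h => (VertexLabel.w.inj h).1]
  · simp [add_comm]
  · simp [Finset.disjoint_left]

theorem exists_isRealization (α : (j : Fin k) → Fin (l j) → Fin b ⊕ Fin b) (ha : 0 < a)
    (hb : 0 < b) (hn : n = a + 2 * b - 1 + ∑ j, l j) :
    ∃ p : VertexLabel a b k l → Fin n → ℝ, IsRealization α p := by
  classical
  obtain ⟨s⟩ := LabelChoice.nonempty k l ha hb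
  have hcard : Fintype.card {x // ¬ FacetKind.yu.Omits s x} = n := by
    rw [Fintype.card_subtype_compl, card_omits_yu, VertexLabel.card_eq]
    omega
  let ε := Fintype.equivFinOfCardEq hcard
  obtain ⟨ψ, hψ, hψε⟩ := exists_satisfiesRelations_eq α .yu s fun x =>
    if hx : FacetKind.yu.Omits s x then (0 : Fin n → ℤ) else Pi.single (ε ⟨x, hx⟩) 1
  refine ⟨fun x => (Int.castAddHom ℝ).compLeft (Fin n) (ψ x),
    (hψ.map _).isRealization (fun x i => ⟨ψ x i, rfl⟩) ε fun x => ?_⟩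
  rw [hψε x x.2, dif_neg x.2]
  ext i
  simp [Pi.single_apply]

namespace IsRealization

variable (hp : IsRealization α p)

/-- The functional of the facet of kind `φ.1` determined by the choice `φ.2`. -/
noncomputable def facet (φ : FacetKind × LabelChoice a b k l) : (Fin n → ℝ) →ₗ[ℝ] ℝ :=
  (hp.ext (facetValue α φ.1 φ.2) (satisfiesRelations_unitSolution _ _ _)).choose

theorem facet_apply (φ : FacetKind × LabelChoice a b k l) (x : VertexLabel a b k l) :
    hp.facet φ (p x) = facetValue α φ.1 φ.2 x :=
  (hp.ext (facetValue α φ.1 φ.2) (satisfiesRelations_unitSolution _ _ _)).choose_spec x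

theorem facet_le_one (φ : FacetKind × LabelChoice a b k l) (x : VertexLabel a b k l) :
    hp.facet φ (p x) ≤ 1 :=
  (hp.facet_apply φ x).trans_le (facetValue_le_one _ _ _)

theorem facet_eq_one_iff (φ : FacetKind × LabelChoice a b k l) (x : VertexLabel a b k l) :
    hp.facet φ (p x) = 1 ↔ ¬ φ.1.Omits φ.2 x := by
  rw [facet_apply, facetValue_eq_one_iff]

include hp in
theorem exists_dual (κ : FacetKind) (s : LabelChoice a b k l) {x : VertexLabel a b k l}
    (hx : ¬ κ.Omits s x) : ∃ g : (Fin n → ℝ) →ₗ[ℝ] ℝ, LatticeIntegral g ∧ g (p x) = 1 ∧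
      ∀ x', ¬ κ.Omits s x' → x' ≠ x → g (p x') = 0 := by
  classical
  obtain ⟨ψ, hψ, heq⟩ := exists_satisfiesRelations_eq α κ s (Pi.single x 1 : _ → ℤ)
  obtain ⟨g, hg⟩ := hp.ext _ hψ.intCast
  refine ⟨g, hp.int g fun x' => ⟨_, hg x'⟩, ?_, fun x' hx' hne => ?_⟩
  · rw [hg, heq x hx, Pi.single_eq_same, Int.cast_one]
  · rw [hg, heq x' hx', Pi.single_eq_of_ne hne, Int.cast_zero]

theorem facetSystem (ha : 0 < a) (hb : 0 < b) (hl : ∀ j, 1 ≤ l j) : FacetSystem p hp.facet where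
  lattice := hp.lattice
  le_one := hp.facet_le_one
  dual φ x hx := by
    simp only [hp.facet_eq_one_iff] at hx ⊢
    exact hp.exists_dual φ.1 φ.2 hx
  sep φ g hg := by
    simp only [hp.facet_eq_one_iff] at hg
    exact hp.sep g (congrFun ((hp.rel.comp_linearMap g).eq_zero φ.1 φ.2 hg))
  wall φ x hx := by
    obtain ⟨κ, s, hκx, hκ⟩ := φ.1.exists_wall φ.2 x ((hp.facet_eq_one_iff φ x).1 hx)
    refine ⟨(κ, s), hx, lt_of_le_of_ne (hp.facet_le_one _ _) fun h =>
      (hp.facet_eq_one_iff (κ, s) x).1 h hκx, fun x' hne hx' => ?_⟩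
    rw [hp.facet_eq_one_iff] at hx' ⊢
    exact hκ x' hne hx'
  cover x := by
    obtain ⟨κ, s, h⟩ := FacetKind.exists_not_omits ha hb hl x
    exact ⟨(κ, s), (hp.facet_eq_one_iff _ _).2 h⟩

end IsRealization

end Realizations

/-! ### Removing a vertex -/

section Removal

variable {n a b k : ℕ} {l : Fin k → ℕ} {α : (j : Fin k) → Fin (l j) → Fin b ⊕ Fin b}

theorem adjust_single_nonpos {x x' : VertexLabel a b k l} {s : LabelChoice a b k l}
    {dv dy dz dt du : ℝ} (hx : ∀ e, x ≠ .ofName e) (hdv : dv ≤ 0) (hdy : dy ≤ 0) (hdz : dz ≤ 0)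
    (hdt : dt ≤ 0) (hdu : du ≤ 0) [DecidableEq (VertexLabel a b k l)] (hne : x' ≠ x) :
    adjust α (Pi.single x 1) s dv dy dz dt du x' ≤ 0 := by
  have hname : ∀ e, adjust α (Pi.single x 1) s dv dy dz dt du (.ofName e) ≤ 0 := by
    rintro (q | r)
    · exact add_nonpos (Pi.single_eq_of_ne (hx (.inl q)).symm _).le (Pi.single_nonpos.2 hdy q)
    · exact add_nonpos (Pi.single_eq_of_ne (hx (.inr r)).symm _).le (Pi.single_nonpos.2 hdu r)
  have hx' : (Pi.single x 1 : VertexLabel a b k l → ℝ) x' ≤ 0 := (Pi.single_eq_of_ne hne _).le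
  cases x' with
  | v i => exact add_nonpos hx' (Pi.single_nonpos.2 hdv i)
  | y q => exact hname (.inl q)
  | z => exact add_nonpos hx' hdz
  | t => exact add_nonpos hx' hdt
  | u r => exact hname (.inr r)
  | w j i =>
    have hsingle : (0 : VertexLabel a b k l → ℝ) ≤ Pi.single x 1 := Pi.single_nonneg.2 zero_le_one
    simp only [adjust_ofName] at hname
    exact add_nonpos hx' <| Pi.single_nonpos.2 (sub_nonpos.2 <|
      (Finset.sum_nonpos fun m _ => hname _).trans <|
      Finset.sum_nonneg fun i _ => hsingle (.w j i)) i

/-- The number of occurrences of the name `e` in the relation of the family `w_{·,j}`. -/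
def nameMultiplicity (α : (j : Fin k) → Fin (l j) → Fin b ⊕ Fin b) (e : Fin b ⊕ Fin b)
    (j : Fin k) : ℕ := Finset.card {m | α j m = e}

theorem nameMultiplicity_pos_iff {e : Fin b ⊕ Fin b} {j : Fin k} :
    0 < nameMultiplicity α e j ↔ ∃ m, α j m = e := by
  simp [nameMultiplicity, Finset.card_pos, Finset.filter_nonempty_iff]

theorem sum_single_eq_nameMultiplicity_mul (e : Fin b ⊕ Fin b) (j : Fin k) (ε : ℝ) :
    ∑ m, (Pi.single e ε : _ → ℝ) (α j m) = nameMultiplicity α e j * ε := by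
  simp [Pi.single_apply, ← Finset.sum_filter, nameMultiplicity]

theorem SatisfiesRelations.eq_zero_of_nameMultiplicity_pos {ψ : VertexLabel a b k l → ℝ}
    (h : SatisfiesRelations α ψ) (s : LabelChoice a b k l) {e : Fin b ⊕ Fin b} {j : Fin k}
    (hj : 0 < nameMultiplicity α e j) (hv : ∀ i ≠ s.i, ψ (.v i) = 0)
    (hname : ∀ e' ≠ e, ψ (.ofName e') = 0)
    (hw : ∀ j' i, j' = j ∨ i ≠ s.c j' → ψ (.w j' i) = 0) : ψ = 0 := by
  have hsingle : ∀ e', ψ (.ofName e') = (Pi.single e (ψ (.ofName e)) : _ → ℝ) e' := by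
    intro e'
    rcases eq_or_ne e' e with rfl | hne
    · simp
    · rw [hname e' hne, Pi.single_eq_of_ne hne]
  have he : ψ (.ofName e) = 0 := by
    have hsum := h.w j
    simp only [hw j _ (.inl rfl), Finset.sum_const_zero] at hsum
    rw [Finset.sum_congr rfl fun m _ => hsingle (α j m), sum_single_eq_nameMultiplicity_mul] at hsum
    exact (mul_eq_zero.1 hsum.symm).resolve_left (Nat.cast_ne_zero.2 hj.ne')
  simp only [he, Pi.single_zero, Pi.zero_apply] at hsingle
  refine h.eq_zero .yu s fun x hx => ?_
  cases x with
  | v i => exact hv i (by simpa [FacetKind.Omits] using hx)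
  | y q => exact hsingle (.inl q)
  | z => simp [FacetKind.Omits] at hx
  | t => simp [FacetKind.Omits] at hx
  | u r => exact hsingle (.inr r)
  | w j i => exact hw j i (.inr hx)

section UnitSolution

variable {T Y ε : ℝ} {s : LabelChoice a b k l} {e : Fin b ⊕ Fin b}

theorem exists_unitSolution_ofName_eq (s : LabelChoice a b k l) (e : Fin b ⊕ Fin b)
    (hε0 : 0 ≤ ε) (hε1 : ε ≤ 1) : ∃ (T Y : ℝ) (s : LabelChoice a b k l), |T| = ε ∧
      (a + b - 1) * (T - 1) - Y ≤ 0 ∧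
      ∀ e', unitSolution α T Y s (.ofName e') = 1 + (Pi.single e ε : _ → ℝ) e' := by
  have hab := s.one_lt_add
  rcases e with q | r
  · refine ⟨ε, 1 + ε, { s with q := q }, abs_of_nonneg hε0, by nlinarith, ?_⟩
    rintro (q' | r')
    · simp [VertexLabel.ofName, unitSolution_y, Pi.single_apply]
    · simp [VertexLabel.ofName, unitSolution_u]
  · refine ⟨-ε, 1, { s with r := r }, by rw [abs_neg, abs_of_nonneg hε0], by nlinarith, ?_⟩
    rintro (q' | r')
    · simp [VertexLabel.ofName, unitSolution_y]
    · simp [VertexLabel.ofName, unitSolution_u, Pi.single_apply]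

variable (hname : ∀ e', unitSolution α T Y s (.ofName e') = 1 + (Pi.single e ε : _ → ℝ) e')

include hname

theorem unitSolution_w_of_ofName_eq (j : Fin k) (i : Fin (l j + 1)) :
    unitSolution α T Y s (.w j i) =
      1 + (Pi.single (s.c j) (nameMultiplicity α e j * ε - 1) : Fin (l j + 1) → ℝ) i := by
  rw [unitSolution_w, ← sum_single_eq_nameMultiplicity_mul]
  simp only [hname, add_sub_cancel_left]

theorem unitSolution_le_one_of_ofName_eq (hT : |T| ≤ 1) (hV : (a + b - 1) * (T - 1) - Y ≤ 0)
    (hmul : ∀ j, nameMultiplicity α e j * ε ≤ 1) {x : VertexLabel a b k l} (hx : x ≠ .ofName e) :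
    unitSolution α T Y s x ≤ 1 := by
  have hne : ∀ e', x = .ofName e' → unitSolution α T Y s (.ofName e') ≤ 1 := by
    rintro e' rfl
    rw [hname, Pi.single_eq_of_ne (fun h => hx (congrArg _ h)), add_zero]
  cases x with
  | v i => exact one_add_single_le_one hV
  | y q => exact hne (.inl q) rfl
  | z =>
    rw [unitSolution_z]
    exact neg_le.1 (abs_le.1 hT).1
  | t =>
    rw [unitSolution_t]
    exact (abs_le.1 hT).2
  | u r => exact hne (.inr r) rfl
  | w j i =>
    rw [unitSolution_w_of_ofName_eq hname]
    exact one_add_single_le_one (sub_nonpos.2 (hmul j))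

end UnitSolution

theorem VertexLabel.ofName_injective :
    Function.Injective (VertexLabel.ofName : _ → VertexLabel a b k l) := by
  rintro (q | r) (q' | r') h <;> cases h <;> rfl

namespace IsRealization

variable {p : VertexLabel a b k l → Fin n → ℝ} (hp : IsRealization α p) {Q : Set (Fin n → ℝ)}
  (hQ : IsSmoothFano Q)

include hp

-- The vertices of `Q` would lie in a half-space bounded by a hyperplane through the origin.
include hQ in
theorem not_vertexSet_subset_of_nonpos {x : VertexLabel a b k l} {ψ : VertexLabel a b k l → ℝ}
    (hψ : SatisfiesRelations α ψ) (hx : ψ x ≠ 0) (hneg : ∀ x' ≠ x, ψ x' ≤ 0) :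
    ¬ vertexSet Q ⊆ p '' {x}ᶜ := by
  intro hV
  obtain ⟨f, hf⟩ := hp.ext ψ hψ
  have hf0 : -f = 0 := hQ.eq_zero_of_forall_vertexSet_nonneg fun q hq => by
    obtain ⟨x', hx', rfl⟩ := hV hq
    exact neg_nonneg.2 ((hf x').trans_le (hneg x' hx'))
  rw [← hf, neg_eq_zero.1 hf0] at hx
  exact hx rfl

include hQ in
theorem not_removal_v (ha : 2 ≤ a) (hb : 0 < b) (i : Fin a) :
    ¬ vertexSet Q ⊆ p '' {.v i}ᶜ := by
  classical
  have : Nontrivial (Fin a) := Fin.nontrivial_iff_two_le.2 ha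
  obtain ⟨i', hi'⟩ := exists_ne i
  let s : LabelChoice a b k l := ⟨i', ⟨0, hb⟩, ⟨0, hb⟩, fun _ => 0⟩
  refine hp.not_vertexSet_subset_of_nonpos hQ
    (ψ := adjust α (Pi.single (.v i) 1) s (-1) 0 0 0 0) (satisfiesRelations_adjust ?_ ?_ ?_) ?_
    fun x => adjust_single_nonpos ?_ ?_ le_rfl le_rfl le_rfl le_rfl
  · simp [Pi.single_apply]
  · simp
  · simp
  · simp [adjust, s, hi'.symm]
  · rintro (_ | _) <;> simp [VertexLabel.ofName]
  · simp

include hQ in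
theorem not_removal_w (ha : 0 < a) (hb : 0 < b) {j : Fin k} (hl : 1 ≤ l j) (i : Fin (l j + 1)) :
    ¬ vertexSet Q ⊆ p '' {.w j i}ᶜ := by
  classical
  have : Nontrivial (Fin (l j + 1)) := Fin.nontrivial_iff_two_le.2 (by omega)
  obtain ⟨i', hi'⟩ := exists_ne i
  let s : LabelChoice a b k l :=
    ⟨⟨0, ha⟩, ⟨0, hb⟩, ⟨0, hb⟩, Function.update (fun _ => 0) j i'⟩
  refine hp.not_vertexSet_subset_of_nonpos hQ
    (ψ := adjust α (Pi.single (.w j i) 1) s 0 0 0 0 0) (satisfiesRelations_adjust ?_ ?_ ?_) ?_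
    fun x => adjust_single_nonpos ?_ le_rfl le_rfl le_rfl le_rfl le_rfl
  · simp
  · simp
  · simp
  · simp [adjust, s, hi'.symm]
  · rintro (_ | _) <;> simp [VertexLabel.ofName]

include hQ in
theorem not_removal_z (ha : 0 < a) (hb : 0 < b) : ¬ vertexSet Q ⊆ p '' {.z}ᶜ := by
  classical
  obtain ⟨s⟩ := LabelChoice.nonempty k l ha hb
  have hab := s.one_lt_add
  refine hp.not_vertexSet_subset_of_nonpos hQ
    (ψ := adjust α (Pi.single .z 1) s 0 (1 - a - b) 0 (-1) (2 - a - b))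
    (satisfiesRelations_adjust ?_ ?_ ?_) ?_ fun x =>
    adjust_single_nonpos ?_ le_rfl (by linarith) le_rfl (by simp) ?_
  · simp only [ne_eq, reduceCtorEq, not_false_eq_true, Pi.single_eq_of_ne, Finset.sum_const_zero,
      add_zero, zero_add, smul_neg, zsmul_eq_mul, Int.cast_sub, Int.cast_add, Int.cast_natCast,
      Int.cast_one, mul_one, neg_sub]
    ring
  · simp only [ne_eq, reduceCtorEq, not_false_eq_true, Pi.single_eq_of_ne, Finset.sum_const_zero,
      zero_add, Pi.single_eq_same, add_zero]
    ring
  · simp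
  · simp [adjust]
  · rintro (_ | _) <;> simp [VertexLabel.ofName]
  · have : (2 : ℝ) ≤ a + b := mod_cast Nat.add_le_add ha hb
    linarith

/-- With `N = a + b - 1`, the solution equal to one on the families `v` and `y` is a facet
functional of the remaining polytope, and its value at `z` is `-(1 + 1 / N)`. -/
theorem isFacetFunctional_of_removal_t (s : LabelChoice a b k l)
    (hV : vertexSet Q = p '' {.t}ᶜ) {f : (Fin n → ℝ) →ₗ[ℝ] ℝ}
    (hf : ∀ x, f (p x) = unitSolution α (1 + (a + b - 1 : ℝ)⁻¹) 1 s x) :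
    IsFacetFunctional Q f := by
  have hN : (0 : ℝ) < a + b - 1 := sub_pos.2 s.one_lt_add
  have hT : 1 - (1 + (a + b - 1 : ℝ)⁻¹) ≤ 0 := by simpa using hN.le
  have hv : ∀ i, f (p (.v i)) = 1 := fun i => by
    rw [hf, unitSolution_v, add_sub_cancel_left, mul_inv_cancel₀ hN.ne']
    simp
  have hy : ∀ q, f (p (.y q)) = 1 := fun q => by simp [hf, unitSolution_y]
  constructor
  · rw [hV]
    rintro _ ⟨x, hx, rfl⟩
    cases x with
    | v i => exact (hv i).le
    | y q => exact (hy q).le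
    | z => rw [hf, unitSolution_z]; linarith
    | t => exact absurd rfl hx
    | u r => exact hf _ ▸ one_add_single_le_one (by linarith)
    | w j i => exact hf _ ▸ unitSolution_w_le_one le_rfl (by linarith) j i
  · intro g hg
    replace hg : ∀ x ≠ .t, f (p x) = 1 → g (p x) = 0 := fun x hx =>
      hg _ (hV ▸ Set.mem_image_of_mem p hx)
    have hrel := hp.rel.comp_linearMap g
    have hgv : ∀ i, g (p (.v i)) = 0 := fun i => hg _ (by simp) (hv i)
    have hgy : ∀ q, g (p (.y q)) = 0 := fun q => hg _ (by simp) (hy q)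
    have hgt : g (p .t) = 0 := by
      have h := hrel.vy
      simp only [hgv, hgy, Finset.sum_const_zero, add_zero, zsmul_eq_mul] at h
      push_cast at h
      exact (mul_eq_zero.1 h.symm).resolve_left hN.ne'
    refine hp.sep g (congrFun (hrel.eq_zero .vt s fun x hx => ?_))
    cases x with
    | v i => exact hgv i
    | y q => exact hgy q
    | z => simp [FacetKind.Omits] at hx
    | t => exact hgt
    | u r =>
      refine hg _ (by simp) ?_
      rw [hf, unitSolution_u, one_add_single_eq_one_iff]
      exact fun hr => absurd hr (by simpa [FacetKind.Omits] using hx)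
    | w j i =>
      exact hg _ (by simp) (hf _ ▸ (unitSolution_w_eq_one_iff le_rfl (by linarith) j i).2 hx)

include hQ in
theorem not_removal_t (hn : 0 < n) (ha : 2 ≤ a) (hb : 0 < b) : vertexSet Q ≠ p '' {.t}ᶜ := by
  intro hV
  obtain ⟨s⟩ := LabelChoice.nonempty k l (by omega : 0 < a) hb
  obtain ⟨f, hf⟩ := hp.ext _ (satisfiesRelations_unitSolution (1 + (a + b - 1 : ℝ)⁻¹) 1 s)
  obtain ⟨m, hm⟩ := hQ.latticeIntegral_of_isFacetFunctional hn
    (hp.isFacetFunctional_of_removal_t s hV hf) _ (hp.lattice .z)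
  rw [hf, unitSolution_z] at hm
  have hN : (1 : ℝ) < a + b - 1 := by
    have : (3 : ℝ) ≤ a + b := mod_cast Nat.add_le_add ha hb
    linarith
  have hN0 : (0 : ℝ) < (a + b - 1 : ℝ)⁻¹ := by positivity
  have hN1 : (a + b - 1 : ℝ)⁻¹ < 1 := inv_lt_one_of_one_lt₀ hN
  have hlt : -2 < m := by exact_mod_cast (by linarith : (-2 : ℝ) < m)
  have hgt : m < -1 := by exact_mod_cast (by linarith : (m : ℝ) < -1)
  omega

/-- With `ε⁻¹` the largest multiplicity of the name `e`, the vertex named `e` can be raised to the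
value `1 + ε`, and the functional still cuts out a facet of the remaining polytope. -/
theorem exists_functional_of_nameMultiplicity (s : LabelChoice a b k l) {e : Fin b ⊕ Fin b}
    {j : Fin k} (hj : 0 < nameMultiplicity α e j)
    (hmax : ∀ j', nameMultiplicity α e j' ≤ nameMultiplicity α e j) :
    ∃ (f : (Fin n → ℝ) →ₗ[ℝ] ℝ) (τ : VertexLabel a b k l), (τ = .z ∨ τ = .t) ∧
      f (p τ) = (nameMultiplicity α e j : ℝ)⁻¹ ∧ (∀ x ≠ .ofName e, f (p x) ≤ 1) ∧
      ∀ g : (Fin n → ℝ) →ₗ[ℝ] ℝ,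
        (∀ x, x ≠ .ofName e → x ≠ τ → f (p x) = 1 → g (p x) = 0) → g = 0 := by
  have hj' : (1 : ℝ) ≤ nameMultiplicity α e j := by exact_mod_cast hj
  have hε1 : (nameMultiplicity α e j : ℝ)⁻¹ ≤ 1 := inv_le_one_of_one_le₀ hj'
  obtain ⟨T, Y, s, hT, hV, hname⟩ :=
    exists_unitSolution_ofName_eq (α := α) s e (inv_nonneg.2 (zero_le_one.trans hj')) hε1
  obtain ⟨f, hf⟩ := hp.ext _ (satisfiesRelations_unitSolution T Y s)
  obtain ⟨τ, hτ, hfτ⟩ : ∃ τ : VertexLabel a b k l, (τ = .z ∨ τ = .t) ∧ f (p τ) = |T| := by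
    rcases abs_choice T with h | h
    · exact ⟨.t, .inr rfl, by rw [h, hf, unitSolution_t]⟩
    · exact ⟨.z, .inl rfl, by rw [h, hf, unitSolution_z]⟩
  refine ⟨f, τ, hτ, hfτ.trans hT, fun x hx => ?_, fun g hg => hp.sep g <| congrFun <|
    (hp.rel.comp_linearMap g).eq_zero_of_nameMultiplicity_pos s hj (fun i hi => hg _ ?_ ?_ ?_)
      (fun e' he' => hg _ ?_ ?_ ?_) fun j' i hi => hg _ ?_ ?_ ?_⟩
  · rw [hf]
    refine unitSolution_le_one_of_ofName_eq hname (hT.trans_le hε1) hV (fun j' => ?_) hx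
    exact mul_inv_le_one_of_le₀ (by exact_mod_cast hmax j') (by positivity)
  · rcases e with _ | _ <;> simp [VertexLabel.ofName]
  · rcases hτ with rfl | rfl <;> simp
  · rw [hf, unitSolution_v, Pi.single_eq_of_ne hi, add_zero]
  · exact VertexLabel.ofName_injective.ne he'
  · rcases hτ with rfl | rfl <;> rcases e' with _ | _ <;> simp [VertexLabel.ofName]
  · rw [hf, hname, Pi.single_eq_of_ne he', add_zero]
  · rcases e with _ | _ <;> simp [VertexLabel.ofName]
  · rcases hτ with rfl | rfl <;> simp
  · rw [hf, unitSolution_w_of_ofName_eq hname, one_add_single_eq_one_iff]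
    rintro rfl
    obtain rfl := hi.resolve_right fun h => h rfl
    rw [mul_inv_cancel₀ (by positivity), sub_self]

include hQ in
theorem not_removal_ofName (hn : 0 < n) (hinj : Function.Injective p) (s : LabelChoice a b k l)
    (e : Fin b ⊕ Fin b) (he : ∃ j m, α j m = e) : vertexSet Q ≠ p '' {.ofName e}ᶜ := by
  intro hV
  obtain ⟨j₀, hj₀⟩ := he
  have : Nonempty (Fin k) := ⟨j₀⟩
  obtain ⟨j, hmax⟩ := Finite.exists_max (nameMultiplicity α e)
  have hj := (nameMultiplicity_pos_iff.2 hj₀).trans_le (hmax j₀)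
  obtain ⟨f, τ, hτ, hfτ, hle, hsep⟩ := hp.exists_functional_of_nameMultiplicity s hj hmax
  have hmem : ∀ x ≠ .ofName e, p x ∈ vertexSet Q := fun x hx => hV ▸ Set.mem_image_of_mem p hx
  have hτe : τ ≠ .ofName e := by
    rcases hτ with rfl | rfl <;> rcases e with _ | _ <;> simp [VertexLabel.ofName]
  have hfacet : IsFacetFunctional Q f := by
    refine ⟨?_, fun g hg => hsep g fun x hx _ => hg _ (hmem x hx)⟩
    rw [hV]
    rintro _ ⟨x, hx, rfl⟩
    exact hle x hx
  have hone : f (p τ) = 1 := by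
    obtain ⟨m, hm⟩ := hQ.latticeIntegral_of_isFacetFunctional hn hfacet _ (hp.lattice τ)
    have hpos : (0 : ℝ) < m := by rw [← hm, hfτ]; positivity
    have hm1 : (m : ℝ) ≤ 1 := hm ▸ hle τ hτe
    obtain rfl : m = 1 :=
      le_antisymm (by exact_mod_cast hm1) (Int.add_one_le_of_lt (by exact_mod_cast hpos))
    rw [hm, Int.cast_one]
  obtain ⟨g, hgτ, hg⟩ := hQ.exists_dual_of_isFacetFunctional hn hfacet (hmem τ hτe) hone
  have hg0 : g = 0 := hsep g fun x hx hxτ hfx => hg _ (hmem x hx) hfx (hinj.ne hxτ)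
  simp [hg0] at hgτ

include hQ in
theorem not_removal (hn : 0 < n) (ha : 2 ≤ a) (hb : 0 < b) (hl : ∀ j, 1 ≤ l j)
    (hα : ∀ e, ∃ j m, α j m = e) (x : VertexLabel a b k l) : vertexSet Q ≠ p '' {x}ᶜ := by
  have hinj := (hp.facetSystem (by omega) hb hl).injective
  obtain ⟨s⟩ := LabelChoice.nonempty k l (by omega : 0 < a) hb
  cases x with
  | v i => exact fun hV => hp.not_removal_v hQ ha hb i hV.le
  | y q => exact hp.not_removal_ofName hQ hn hinj s (.inl q) (hα _)
  | z => exact fun hV => hp.not_removal_z hQ (by omega) hb hV.le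
  | t => exact hp.not_removal_t hQ hn ha hb
  | u r => exact hp.not_removal_ofName hQ hn hinj s (.inr r) (hα _)
  | w j i => exact fun hV => hp.not_removal_w hQ (by omega) hb (hl j) i hV.le

end IsRealization

end Removal

/-! ### No vertex can be added -/

section Addition

variable {n a b k : ℕ} {l : Fin k → ℕ} {α : (j : Fin k) → Fin (l j) → Fin b ⊕ Fin b}
  {p : VertexLabel a b k l → Fin n → ℝ} {Q : Set (Fin n → ℝ)} {w₀ : Fin n → ℝ}

theorem iff_of_forall_update {ι : Type*} [Finite ι] [DecidableEq ι] {β : ι → Type*}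
    {S : ((i : ι) → β i) → Prop} (h : ∀ c i m, S c ↔ S (Function.update c i m))
    (c c' : (i : ι) → β i) : S c ↔ S c' := by
  have := Fintype.ofFinite ι
  have hpiecewise : ∀ F : Finset ι, S c ↔ S (F.piecewise c' c) := by
    intro F
    induction F using Finset.induction_on with
    | empty => simp
    | insert i F _ ih => rw [ih, Finset.piecewise_insert, ← h]
  simpa using hpiecewise Finset.univ

namespace IsRealization

variable (hp : IsRealization α p)

theorem facet_yu_congr {s s' : LabelChoice a b k l} (hi : s.i = s'.i) (hc : s.c = s'.c) :
    hp.facet (.yu, s) = hp.facet (.yu, s') := by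
  refine sub_eq_zero.1 (hp.sep _ fun x => ?_)
  rw [LinearMap.sub_apply, facet_apply, facet_apply]
  cases x <;> simp [facetValue, unitSolution, adjust, FacetKind.valueT, FacetKind.valueY, hi, hc]

theorem crossesWall_facet {φ φ' : FacetKind × LabelChoice a b k l} {x : VertexLabel a b k l}
    (hx : ¬ φ.1.Omits φ.2 x) (hx' : φ'.1.Omits φ'.2 x)
    (hne : ∀ x' ≠ x, ¬ φ.1.Omits φ.2 x' → ¬ φ'.1.Omits φ'.2 x') :
    CrossesWall p hp.facet φ φ' x := by
  refine ⟨(hp.facet_eq_one_iff φ x).2 hx, (hp.facet_le_one φ' x).lt_of_ne fun h => ?_,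
    fun x' hxx' h => ?_⟩
  · exact (hp.facet_eq_one_iff φ' x).1 h hx'
  · exact (hp.facet_eq_one_iff φ' x').2 (hne x' hxx' ((hp.facet_eq_one_iff φ x').1 h))

theorem crossesWall_vz_vt (s : LabelChoice a b k l) :
    CrossesWall p hp.facet (.vz, s) (.vt, s) .z :=
  hp.crossesWall_facet (by simp [FacetKind.Omits]) (by simp [FacetKind.Omits]) fun x' => by
    cases x' <;> simp +contextual [FacetKind.Omits]

theorem crossesWall_vz_zu (s : LabelChoice a b k l) (i : Fin a) :
    CrossesWall p hp.facet (.vz, s) (.zu, { s with i := i }) (.v i) :=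
  hp.crossesWall_facet (by simp [FacetKind.Omits]) (by simp [FacetKind.Omits]) fun x' => by
    cases x' <;> simp +contextual [FacetKind.Omits]

variable (hS : FacetSystem p hp.facet) (hadd : IsVertexAddition p Q w₀) (hn : 0 < n)

include hS hadd hn

theorem one_lt_facet_iff {φ φ' : FacetKind × LabelChoice a b k l} (x : VertexLabel a b k l)
    (hx : ¬ φ.1.Omits φ.2 x) (hx' : φ'.1.Omits φ'.2 x)
    (hne : ∀ x' ≠ x, ¬ φ.1.Omits φ.2 x' → ¬ φ'.1.Omits φ'.2 x')
    (hzero : facetValue α φ'.1 φ'.2 x = 0) : 1 < hp.facet φ w₀ ↔ 1 < hp.facet φ' w₀ :=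
  hadd.one_lt_iff_of_apply_eq_zero hS hn (hp.crossesWall_facet hx hx' hne)
    ((hp.facet_apply φ' x).trans hzero)

theorem one_lt_facet_yu_iff_zu (s : LabelChoice a b k l) :
    1 < hp.facet (.yu, s) w₀ ↔ 1 < hp.facet (.zu, s) w₀ :=
  hp.one_lt_facet_iff hS hadd hn (.y s.q) (by simp [FacetKind.Omits]) (by simp [FacetKind.Omits])
    (fun x' => by cases x' <;> simp +contextual [FacetKind.Omits])
    (by simp [facetValue, unitSolution_y, FacetKind.valueY])

theorem one_lt_facet_yu_iff_yt (s : LabelChoice a b k l) :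
    1 < hp.facet (.yu, s) w₀ ↔ 1 < hp.facet (.yt, s) w₀ :=
  hp.one_lt_facet_iff hS hadd hn (.u s.r) (by simp [FacetKind.Omits]) (by simp [FacetKind.Omits])
    (fun x' => by cases x' <;> simp +contextual [FacetKind.Omits])
    (by simp [facetValue, unitSolution_u, FacetKind.valueT, FacetKind.valueY])

theorem one_lt_facet_yt_iff_vt (s : LabelChoice a b k l) :
    1 < hp.facet (.yt, s) w₀ ↔ 1 < hp.facet (.vt, s) w₀ :=
  hp.one_lt_facet_iff hS hadd hn (.y s.q) (by simp [FacetKind.Omits]) (by simp [FacetKind.Omits])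
    (fun x' => by cases x' <;> simp +contextual [FacetKind.Omits])
    (by simp [facetValue, unitSolution_y, FacetKind.valueY])

theorem one_lt_facet_yt_iff_update (s : LabelChoice a b k l) (i : Fin a) :
    1 < hp.facet (.yt, s) w₀ ↔ 1 < hp.facet (.yt, { s with i := i }) w₀ := by
  rcases eq_or_ne i s.i with rfl | hi
  · rfl
  · exact hp.one_lt_facet_iff hS hadd hn (.v i) (by simpa [FacetKind.Omits] using hi)
      (by simp [FacetKind.Omits]) (fun x' => by cases x' <;> simp +contextual [FacetKind.Omits])
      (by simp [facetValue, unitSolution_v, FacetKind.valueT, FacetKind.valueY])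

theorem one_lt_facet_yu_iff_update (s : LabelChoice a b k l) (j : Fin k) (m : Fin (l j + 1)) :
    1 < hp.facet (.yu, s) w₀ ↔
      1 < hp.facet (.yu, { s with c := Function.update s.c j m }) w₀ := by
  rcases eq_or_ne m (s.c j) with rfl | hm
  · rw [Function.update_eq_self]
  refine hp.one_lt_facet_iff hS hadd hn (.w j m) (by simpa [FacetKind.Omits] using hm)
    (by simp [FacetKind.Omits]) (fun x' hx' => ?_) ?_
  · cases x' with
    | w j' i' =>
      rcases eq_or_ne j' j with rfl | hj
      · simpa [FacetKind.Omits] using fun _ => hx'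
      · simp [FacetKind.Omits, Function.update_of_ne hj]
    | _ => simp [FacetKind.Omits]
  · have hname : ∀ e, facetValue α .yu { s with c := Function.update s.c j m } (.ofName e) = 1 :=
      fun e => (facetValue_eq_one_iff _ _ _).2 (by
        rcases e with _ | _ <;> simp [VertexLabel.ofName, FacetKind.Omits])
    rw [facetValue] at hname ⊢
    simp [unitSolution_w, hname]

theorem one_lt_facet_yu_iff (s s' : LabelChoice a b k l) :
    1 < hp.facet (.yu, s) w₀ ↔ 1 < hp.facet (.yu, s') w₀ := by
  rw [hp.one_lt_facet_yu_iff_yt hS hadd hn, hp.one_lt_facet_yt_iff_update hS hadd hn s s'.i,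
    ← hp.one_lt_facet_yu_iff_yt hS hadd hn]
  rw [hp.facet_yu_congr (s := { s with i := s'.i }) (s' := ⟨s'.i, s'.q, s'.r, s.c⟩) rfl rfl]
  exact iff_of_forall_update
    (S := fun c => 1 < hp.facet (.yu, (⟨s'.i, s'.q, s'.r, c⟩ : LabelChoice a b k l)) w₀)
    (fun c => hp.one_lt_facet_yu_iff_update hS hadd hn ⟨s'.i, s'.q, s'.r, c⟩) s.c s'.c

theorem one_lt_facet_iff_yu {κ : FacetKind} (hκ : κ ≠ .vz) (s s' : LabelChoice a b k l) :
    1 < hp.facet (κ, s) w₀ ↔ 1 < hp.facet (.yu, s') w₀ := by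
  rw [← hp.one_lt_facet_yu_iff hS hadd hn s]
  cases κ with
  | yu => rfl
  | vz => exact absurd rfl hκ
  | yt => exact (hp.one_lt_facet_yu_iff_yt hS hadd hn s).symm
  | zu => exact (hp.one_lt_facet_yu_iff_zu hS hadd hn s).symm
  | vt => rw [hp.one_lt_facet_yu_iff_yt hS hadd hn, hp.one_lt_facet_yt_iff_vt hS hadd hn]

theorem facet_vz_eq_one_add_coord_z {s : LabelChoice a b k l}
    (hsep : (hp.facet (.vz, s) w₀ - 1) * (hp.facet (.vt, s) w₀ - 1) < 0) :
    hp.facet (.vz, s) w₀ = 1 + hS.coord (.vz, s) .z w₀ := by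
  have hvt : hp.facet (.vt, s) (p .z) = -1 := by
    rw [facet_apply, facetValue, unitSolution_z, FacetKind.valueT]
  have hsum := hadd.add_eq_two_of_apply_eq_neg_one hS hn (hp.crossesWall_vz_vt s) hvt hsep
  have hdiff := LinearMap.congr_fun (hS.sub_eq_smul_coord (hp.crossesWall_vz_vt s)) w₀
  simp only [LinearMap.sub_apply, LinearMap.smul_apply, smul_eq_mul, hvt] at hdiff
  linarith

theorem not_one_lt_facet_yu (s : LabelChoice a b k l) : ¬ 1 < hp.facet (.yu, s) w₀ := by
  intro hlt
  obtain ⟨⟨κ, s'⟩, hmax⟩ :=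
    have : Nonempty (FacetKind × LabelChoice a b k l) := ⟨(.yu, s)⟩
    Finite.exists_max fun φ => hp.facet φ (-w₀)
  have hc : ∀ x, 0 ≤ hS.coord (κ, s') x (-w₀) := fun x => hS.coord_nonneg_of_forall_le hmax
  have hsum := hS.sum_coord (κ, s') (-w₀)
  have hz := Finset.single_le_sum (fun x _ => hc x) (Finset.mem_univ .z)
  have hnonneg := Finset.sum_nonneg fun x (_ : x ∈ Finset.univ) => hc x
  rw [hsum] at hz hnonneg
  simp only [map_neg] at hz hnonneg
  have hκ : κ = .vz := by
    by_contra hκ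
    have := (hp.one_lt_facet_iff_yu hS hadd hn hκ s' s).2 hlt
    linarith
  subst hκ
  have hvt : 1 < hp.facet (.vt, s') w₀ :=
    (hp.one_lt_facet_iff_yu hS hadd hn (by simp) s' s).2 hlt
  have := hp.facet_vz_eq_one_add_coord_z hS hadd hn
    (mul_neg_of_neg_of_pos (by linarith) (sub_pos.2 hvt))
  linarith

omit hadd hn in
theorem one_le_coord_v {s : LabelChoice a b k l} {i : Fin a} (hlat : IsLatticePoint w₀)
    (hnonneg : 0 ≤ hS.coord (.vz, s) (.v i) w₀)
    (hlt : hp.facet (.zu, { s with i := i }) w₀ < hp.facet (.vz, s) w₀) :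
    1 ≤ hS.coord (.vz, s) (.v i) w₀ := by
  obtain ⟨m, hm⟩ := hS.latticeIntegral_coord (φ := (.vz, s)) (i := .v i) w₀ hlat
  have hne : hS.coord (.vz, s) (.v i) w₀ ≠ 0 := by
    intro hzero
    have hdiff := LinearMap.congr_fun (hS.sub_eq_smul_coord (hp.crossesWall_vz_zu s i)) w₀
    rw [LinearMap.smul_apply, hzero, smul_zero, LinearMap.sub_apply, sub_eq_zero] at hdiff
    exact hlt.ne hdiff
  have hpos : (0 : ℝ) < m := hm ▸ hnonneg.lt_of_ne' hne
  rw [hm]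
  exact_mod_cast Int.cast_pos.1 hpos

theorem false_of_isVertexAddition (ha : 2 ≤ a) (hb : 0 < b) (hlat : IsLatticePoint w₀) :
    False := by
  have : Nonempty (LabelChoice a b k l) := LabelChoice.nonempty k l (by omega) hb
  obtain ⟨⟨κ, s⟩, hmax⟩ := Finite.exists_max fun φ => hp.facet φ w₀
  obtain ⟨φ, hφ⟩ := hadd.exists_one_lt hS hn
  have hlt : 1 < hp.facet (κ, s) w₀ := hφ.trans_le (hmax φ)
  have hside : ∀ κ' ≠ FacetKind.vz, ∀ s', hp.facet (κ', s') w₀ < 1 := fun κ' hκ' s' =>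
    (not_lt.1 fun h => hp.not_one_lt_facet_yu hS hadd hn s
      ((hp.one_lt_facet_iff_yu hS hadd hn hκ' s' s).1 h)).lt_of_ne (hadd.facet_ne_one hS hn _)
  obtain rfl : κ = .vz := by
    by_contra hκ
    exact hlt.not_gt (hside κ hκ s)
  have hcz := hp.facet_vz_eq_one_add_coord_z hS hadd hn
    (mul_neg_of_pos_of_neg (sub_pos.2 hlt) (sub_neg.2 (hside .vt (by simp) s)))
  have hc : ∀ x, 0 ≤ hS.coord (.vz, s) x w₀ := fun x => hS.coord_nonneg_of_forall_le hmax
  have hcv : ∀ i, 1 ≤ hS.coord (.vz, s) (.v i) w₀ := fun i =>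
    hp.one_le_coord_v hS hlat (hc _) ((hside .zu (by simp) _).trans hlt)
  classical
  have hsum := Finset.sum_le_univ_sum_of_nonneg hc
    (s := {.z, .v ⟨0, by omega⟩, .v ⟨1, by omega⟩})
  rw [Finset.sum_insert (by simp), Finset.sum_insert (by simp), Finset.sum_singleton,
    hS.sum_coord] at hsum
  linarith [hcv ⟨0, by omega⟩, hcv ⟨1, by omega⟩]

end IsRealization

end Addition

/-! ### Primitive collections and primitive relations -/

section Structure

variable {n a b k : ℕ} {l : Fin k → ℕ} {α : (j : Fin k) → Fin (l j) → Fin b ⊕ Fin b}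
  {p : VertexLabel a b k l → Fin n → ℝ}

theorem VertexLabel.range_eq_union {β : Type*} (f : VertexLabel a b k l → β) :
    Set.range f = Set.range (fun i => f (.v i)) ∪ Set.range (fun q => f (.y q)) ∪ {f .z, f .t} ∪
      Set.range (fun r => f (.u r)) ∪ ⋃ j, Set.range fun i => f (.w j i) := by
  ext x
  simp only [Set.mem_union, Set.mem_range, Set.mem_insert_iff, Set.mem_singleton_iff,
    Set.mem_iUnion]
  constructor
  · rintro ⟨i | q | _ | _ | r | ⟨j, i⟩, rfl⟩
    · exact .inl (.inl (.inl (.inl ⟨i, rfl⟩)))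
    · exact .inl (.inl (.inl (.inr ⟨q, rfl⟩)))
    · exact .inl (.inl (.inr (.inl rfl)))
    · exact .inl (.inl (.inr (.inr rfl)))
    · exact .inl (.inr ⟨r, rfl⟩)
    · exact .inr ⟨j, i, rfl⟩
  · rintro ((((⟨i, rfl⟩ | ⟨i, rfl⟩) | rfl | rfl) | ⟨i, rfl⟩) | ⟨j, i, rfl⟩) <;> exact ⟨_, rfl⟩

theorem IsCircuit.exists_image_eq_iff {β : Type*} (f : VertexLabel a b k l → β) (B : Set β) :
    (∃ C, IsCircuit C ∧ B = f '' C) ↔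
      (B = Set.range (fun i => f (.v i)) ∪ Set.range (fun q => f (.y q)) ∨
        B = Set.range (fun q => f (.y q)) ∪ {f .z} ∨ B = {f .z, f .t} ∨
        B = insert (f .t) (Set.range fun r => f (.u r)) ∨
        B = Set.range (fun r => f (.u r)) ∪ Set.range (fun i => f (.v i)) ∨
        ∃ j : Fin k, B = Set.range fun i => f (.w j i)) := by
  have himage : ∀ {ι : Type} (g : ι → VertexLabel a b k l),
      f '' Set.range g = Set.range fun i => f (g i) := fun g => (Set.range_comp f g).symm
  constructor
  · rintro ⟨C, hC, rfl⟩
    cases hC <;> simp only [Set.image_union, himage, Set.image_insert_eq, Set.image_singleton,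
      true_or, or_true]
    exact .inr (.inr (.inr (.inr (.inr ⟨_, rfl⟩))))
  · rintro (rfl | rfl | rfl | rfl | rfl | ⟨j, rfl⟩)
    · exact ⟨_, .vy, by rw [Set.image_union, himage, himage]⟩
    · exact ⟨_, .yz, by rw [Set.image_union, himage, Set.image_singleton]⟩
    · exact ⟨_, .zt, by rw [Set.image_insert_eq, Set.image_singleton]⟩
    · exact ⟨_, .tu, by rw [Set.image_insert_eq, himage]⟩
    · exact ⟨_, .uv, by rw [Set.image_union, himage, himage]⟩
    · exact ⟨_, .w j, (himage _).symm⟩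

namespace IsRealization

theorem isPrimitiveCollection_iff (hp : IsRealization α p) (ha : 0 < a) (hb : 0 < b) (hn : 0 < n)
    (hl : ∀ j, 1 ≤ l j) {B : Set (Fin n → ℝ)} :
    IsPrimitiveCollection (convexHull ℝ (Set.range p)) B ↔ ∃ C, IsCircuit C ∧ B = p '' C := by
  have hS := hp.facetSystem ha hb hl
  have := LabelChoice.nonempty k l ha hb
  have himage : ∀ C : Set (VertexLabel a b k l),
      IsPrimitiveCollection (convexHull ℝ (Set.range p)) (p '' C) ↔ IsCircuit C := fun C => by
    rw [hS.isPrimitiveCollection_image_iff hn]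
    simp only [hp.facet_eq_one_iff, Prod.exists, ← IsCircuit.iff_minimal ha hb]
    exact and_iff_right_of_imp fun hC => hC.ne_univ ha hb
  constructor
  · intro hB
    obtain ⟨C, rfl⟩ := Set.subset_range_iff_exists_image_eq.1 (hS.vertexSet_eq ▸ hB.2.1)
    exact ⟨C, (himage C).1 hB, rfl⟩
  · rintro ⟨C, hC, rfl⟩
    exact (himage C).2 hC

theorem hasGeneralStructure (hp : IsRealization α p) (ha : 0 < a) (hb : 0 < b) (hn : 0 < n)
    (hl : ∀ j, 1 ≤ l j) :
    HasGeneralStructure (convexHull ℝ (Set.range p)) a b k l (fun i => p (.v i))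
      (fun q => p (.y q)) (p .z) (p .t) (fun r => p (.u r)) (fun j i => p (.w j i))
      (fun j i => Sum.elim (fun q => p (.y q)) (fun r => p (.u r)) (α j i)) := by
  have hvy : ∑ i, p (.v i) + ∑ q, p (.y q) = ((a : ℝ) + (b : ℝ) - 1) • p .t := by
    rw [hp.rel.vy, ← Int.cast_smul_eq_zsmul ℝ]
    push_cast
    rfl
  refine ⟨(hp.facetSystem ha hb hl).vertexSet_eq.trans (VertexLabel.range_eq_union p), fun B => ?_,
    hvy, hp.rel.yz, hp.rel.zt, ?_, ?_, fun j => ?_⟩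
  · rw [hp.isPrimitiveCollection_iff ha hb hn hl, IsCircuit.exists_image_eq_iff]
  · linear_combination (norm := module) hp.rel.zt - hp.rel.yz
  · linear_combination (norm := module) hvy - hp.rel.yz + hp.rel.zt
  · rw [hp.rel.w j]
    refine Finset.sum_congr rfl fun i _ => ?_
    rcases h : α j i with q | r <;> simp [VertexLabel.ofName, h]

end IsRealization

end Structure

/-! ### Isolation -/

section Isolation

variable {n a b k : ℕ} {l : Fin k → ℕ} {α : (j : Fin k) → Fin (l j) → Fin b ⊕ Fin b}
  {p : VertexLabel a b k l → Fin n → ℝ} {Q : Set (Fin n → ℝ)}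

theorem bijective_linear_of_image_lattice {φ : (Fin n → ℝ) →ᵃ[ℝ] Fin n → ℝ}
    (h : φ '' {x | IsLatticePoint x} = {x | IsLatticePoint x}) :
    Function.Bijective φ.linear := by
  have hsurj : Function.Surjective φ.linear := by
    obtain ⟨x₀, -, h0⟩ := h.ge (isLatticePoint_zero (n := n))
    choose x _ hxi using fun i => h.ge (isLatticePoint_single (n := n) i)
    have hbasis : ∀ i, φ.linear (x i - x₀) = Pi.single i 1 := fun i => by
      rw [← vsub_eq_sub, AffineMap.linearMap_vsub, hxi, h0, vsub_eq_sub, sub_zero]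
    refine fun y => ⟨∑ i, y i • (x i - x₀), ?_⟩
    simp only [map_sum, map_smul, hbasis]
    exact (pi_eq_sum_univ' y).symm
  exact ⟨LinearMap.injective_iff_surjective.2 hsurj, hsurj⟩

theorem exists_linearEquiv_of_unimodularEquiv {P : Set (Fin n → ℝ)}
    (hP : ∀ x, IsLatticePoint x → x ∈ interior P → x = 0) (hQ : (0 : Fin n → ℝ) ∈ interior Q)
    (h : UnimodularEquiv P Q) : ∃ L : (Fin n → ℝ) ≃ₗ[ℝ] Fin n → ℝ,
      L '' {x | IsLatticePoint x} = {x | IsLatticePoint x} ∧ L '' P = Q := by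
  obtain ⟨φ, hφ, hφP⟩ := h
  have hbij := bijective_linear_of_image_lattice hφ
  obtain ⟨x₀, hx₀, h0⟩ := hφ.ge (isLatticePoint_zero (n := n))
  have hx : x₀ ∈ interior P := by
    refine mem_interior.2 ⟨φ ⁻¹' interior Q, fun y hy => ?_,
      isOpen_interior.preimage φ.continuous_of_finiteDimensional, ?_⟩
    · obtain ⟨z, hz, hzy⟩ := hφP.ge (interior_subset hy)
      exact φ.linear_injective_iff.1 hbij.1 hzy ▸ hz
    · rwa [Set.mem_preimage, h0]
  obtain rfl := hP x₀ hx₀ hx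
  have hL : ⇑(LinearEquiv.ofBijective φ.linear hbij) = φ := by
    ext1 x
    rw [LinearEquiv.ofBijective_apply, AffineMap.decomp' φ, h0]
    simp
  exact ⟨LinearEquiv.ofBijective φ.linear hbij, by rw [hL, hφ], by rw [hL, hφP]⟩

theorem UnimodularEquiv.trans_symm_linearEquiv {P R : Set (Fin n → ℝ)}
    {L : (Fin n → ℝ) ≃ₗ[ℝ] Fin n → ℝ} (h : UnimodularEquiv Q R)
    (hL : L '' {x | IsLatticePoint x} = {x | IsLatticePoint x}) (hLP : L '' P = R) :
    UnimodularEquiv Q P := by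
  obtain ⟨φ, hφ, hφQ⟩ := h
  refine ⟨L.symm.toLinearMap.toAffineMap.comp φ, ?_, ?_⟩ <;>
    simp only [AffineMap.coe_comp, LinearMap.coe_toAffineMap, LinearEquiv.coe_coe, Set.image_comp]
  · rw [hφ]
    conv_lhs => rw [← hL]
    exact L.symm_image_image _
  · rw [hφQ, ← hLP]
    exact L.symm_image_image P

theorem IIsolated.fIsolated {P : Set (Fin n → ℝ)} (h : IIsolated P) : FIsolated P := by
  rintro Q hQ ⟨m, c, hc, h0, h1, hstep⟩
  refine h Q hQ ⟨m, c, hc, h0, h1, fun i => ?_⟩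
  rcases hstep i with ⟨w, hlat, hw, hV, -⟩ | ⟨w, hlat, hw, hV, -⟩
  · exact .inl ⟨w, hlat, hw, hV⟩
  · exact .inr ⟨w, hlat, hw, hV⟩

namespace IsRealization

theorem map (hp : IsRealization α p) (L : (Fin n → ℝ) ≃ₗ[ℝ] Fin n → ℝ)
    (hL : L '' {x | IsLatticePoint x} = {x | IsLatticePoint x}) :
    IsRealization α fun x => L (p x) where
  lattice x := hL.le ⟨p x, hp.lattice x, rfl⟩
  rel := hp.rel.map L.toLinearMap.toAddMonoidHom
  ext ψ hψ := by
    obtain ⟨f, hf⟩ := hp.ext ψ hψ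
    exact ⟨f.comp L.symm.toLinearMap, fun x => by simp [hf]⟩
  sep f hf := by
    have h := hp.sep (f.comp L.toLinearMap) hf
    refine LinearMap.ext fun x => ?_
    simpa using LinearMap.congr_fun h (L.symm x)
  int f hf y hy := by
    obtain ⟨x, hx, rfl⟩ := hL.ge hy
    exact hp.int (f.comp L.toLinearMap) hf x hx

theorem not_iStep (hp : IsRealization α p) (ha : 2 ≤ a) (hb : 0 < b) (hn : 0 < n)
    (hl : ∀ j, 1 ≤ l j) (hα : ∀ s : Fin b ⊕ Fin b, ∃ j i, α j i = s) (hQ : IsSmoothFano Q) :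
    ¬ IStep Q (convexHull ℝ (Set.range p)) := by
  have hS := hp.facetSystem (by omega) hb hl
  rw [IStep, hS.vertexSet_eq]
  rintro (⟨w, -, hw, hV⟩ | ⟨w, hlat, hw, hV⟩)
  · obtain ⟨x, rfl⟩ := hV.ge (Or.inr rfl)
    refine hp.not_removal hQ hn ha hb hl hα x ?_
    rw [Set.image_compl_eq_range_sdiff_image hS.injective, Set.image_singleton, hV,
      Set.union_sdiff_cancel_right]
    rintro y ⟨hy, rfl⟩
    exact hw hy
  · exact hp.false_of_isVertexAddition hS ⟨hQ, hw, hV⟩ hn ha hb hlat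

theorem iIsolated (hp : IsRealization α p) (ha : 2 ≤ a) (hb : 0 < b) (hn : 0 < n)
    (hl : ∀ j, 1 ≤ l j) (hα : ∀ s : Fin b ⊕ Fin b, ∃ j i, α j i = s) :
    IIsolated (convexHull ℝ (Set.range p)) := by
  rintro Q - ⟨m, c, hc, hQc, hPc, hstep⟩
  have hS := hp.facetSystem (by omega) hb hl
  have := LabelChoice.nonempty k l (by omega : 0 < a) hb
  obtain ⟨L, hL, hLP⟩ := exists_linearEquiv_of_unimodularEquiv
    (fun _ => hS.eq_zero_of_mem_interior) (hc (Fin.last m)).2.1 hPc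
  cases m with
  | zero => exact hQc.trans_symm_linearEquiv hL hLP
  | succ m =>
    have hlast : convexHull ℝ (Set.range fun x => L (p x)) = c (Fin.last m).succ := by
      rw [Fin.succ_last, ← hLP]
      exact (congrArg _ (Set.range_comp L p)).trans (L.toLinearMap.image_convexHull _).symm
    exact absurd (hlast ▸ hstep (Fin.last m))
      ((hp.map L hL).not_iStep ha hb hn hl hα (hc (Fin.last m).castSucc))

end IsRealization

end Isolation

/-- For `a ≥ 2`, `b ≥ 1`, `k ≥ 1`, `l_1, …, l_k ≥ 1` and an
assignment `α` of names of elements of `{y_1, …, y_b, u_1, …, u_b}` (where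
`Sum.inl q` names `y_{q+1}` and `Sum.inr q` names `u_{q+1}`) whose set of
values is exactly all of `{y_q, u_q : 1 ≤ q ≤ b}`, there is an I-isolated
(in particular F-isolated) smooth Fano polytope `P` of dimension
`n = a + 2b - 1 + ∑ l_j` with `n + k + 3` vertices whose primitive relations
are exactly those listed in Theorem `general`. -/
theorem exists_I_isolated_with_general_structure (a b k : ℕ) (l : Fin k → ℕ)
    (ha : 2 ≤ a) (hb : 1 ≤ b) (hk : 1 ≤ k) (hl : ∀ j, 1 ≤ l j)
    (α : (j : Fin k) → Fin (l j) → (Fin b ⊕ Fin b))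
    (hα : ∀ s : Fin b ⊕ Fin b, ∃ j i, α j i = s) :
    ∃ P : Set (Fin (a + 2 * b - 1 + ∑ j, l j) → ℝ),
      IsSmoothFano P ∧ IIsolated P ∧ FIsolated P ∧
      (vertexSet P).ncard = (a + 2 * b - 1 + ∑ j, l j) + k + 3 ∧
      ∃ (v : Fin a → Fin (a + 2 * b - 1 + ∑ j, l j) → ℝ)
        (y : Fin b → Fin (a + 2 * b - 1 + ∑ j, l j) → ℝ)
        (z t : Fin (a + 2 * b - 1 + ∑ j, l j) → ℝ)
        (u : Fin b → Fin (a + 2 * b - 1 + ∑ j, l j) → ℝ)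
        (w : (j : Fin k) → Fin (l j + 1) → Fin (a + 2 * b - 1 + ∑ j, l j) → ℝ),
        HasGeneralStructure P a b k l v y z t u w
          (fun j i => Sum.elim y u (α j i)) := by
  have hn : 0 < a + 2 * b - 1 + ∑ j, l j := by omega
  obtain ⟨p, hp⟩ := exists_isRealization (a := a) α (by omega) hb rfl
  have hS := hp.facetSystem (by omega) hb hl
  have := LabelChoice.nonempty k l (by omega : 0 < a) hb
  have hI := hp.iIsolated ha hb hn hl hα
  refine ⟨convexHull ℝ (Set.range p), hS.isSmoothFano (by omega), hI, hI.fIsolated, ?_,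
    _, _, _, _, _, _, hp.hasGeneralStructure (by omega) hb hn hl⟩
  rw [hS.vertexSet_eq, ← Set.image_univ, Set.ncard_image_of_injective _ hS.injective,
    Set.ncard_univ, Nat.card_eq_fintype_card, VertexLabel.card_eq]
  omega
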